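/- arXiv:math/0601570 — 11 statements merged into one kernel-verified Lean document; each statement's English description precedes it below -/
import Mathlib

section
/- Let R be an alternative ring in which 2 is invertible, and let t1, t2, t3 ∈ R satisfy the Cayley relations. Then for all pairwise distinct i, j, k ∈ {1,2,3} one has the anti-associativity identity (ti*tj)*tk = -(ti*(tj*tk)) and the anti-commutativity identity (ti*tj)*tk = -(tk*(ti*tj)). -/
/-! In an alternative ring the associator is alternating. If `x, y, z` anticommute pairwise and
`(x * y) * z = -(x * (y * z))`, then exchanging two neighbouring factors changes the sign of both
bracketings: one of them by anticommutativity, the other because the associator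
`(x * y) * z - x * (y * z)` changes sign. Hence anti-associativity passes to all permutations of
the triple, and with `s = (x * y) * z` every permuted product bracketed to the left is
`sign • s` and every one bracketed to the right is `-sign • s`. A cyclic permutation is even, so
`z * (x * y) = -s`, which is the anti-commutativity identity. -/

/-- The associator changes sign when its first two arguments are exchanged, solved for
`(y * x) * z`. -/
theorem associator_swap_left {R : Type*} [NonAssocRing R]
    (alt_left : ∀ a b : R, (a * a) * b = a * (a * b)) (x y z : R) :
    (y * x) * z = y * (x * z) + x * (y * z) - (x * y) * z := by
  -- Polarization: replace `a` by `x + y` in the left alternative law.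
  have h := alt_left (x + y) z
  simp only [add_mul, mul_add, alt_left] at h
  grind

/-- The associator changes sign when its last two arguments are exchanged, solved for
`(x * z) * y`. -/
theorem associator_swap_right {R : Type*} [NonAssocRing R]
    (alt_right : ∀ a b : R, (b * a) * a = b * (a * a)) (x y z : R) :
    (x * z) * y = x * (z * y) + x * (y * z) - (x * y) * z := by
  have h := alt_right (y + z) x
  simp only [add_mul, mul_add, alt_right] at h
  grind

theorem antiAssoc_swap_left {R : Type*} [NonAssocRing R]
    (alt_left : ∀ a b : R, (a * a) * b = a * (a * b)) {x y z : R}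
    (hyx : y * x = -(x * y)) (h : (x * y) * z = -(x * (y * z))) :
    (y * x) * z = -(y * (x * z)) := by
  have e := associator_swap_left alt_left x y z
  have f : (y * x) * z = -((x * y) * z) := by rw [hyx, neg_mul]
  grind

theorem antiAssoc_swap_right {R : Type*} [NonAssocRing R]
    (alt_right : ∀ a b : R, (b * a) * a = b * (a * a)) {x y z : R}
    (hzy : z * y = -(y * z)) (h : (x * y) * z = -(x * (y * z))) :
    (x * z) * y = -(x * (z * y)) := by
  have e := associator_swap_right alt_right x y z
  have f : x * (z * y) = -(x * (y * z)) := by rw [hzy, mul_neg]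
  grind

/-- Anti-commutativity for an anti-associative triple: `z * (x * y)` is reached from
`(x * y) * z` by two transpositions and one rebracketing, so the total sign is `-1`. -/
theorem antiComm_of_antiAssoc {R : Type*} [NonAssocRing R]
    (alt_left : ∀ a b : R, (a * a) * b = a * (a * b))
    (alt_right : ∀ a b : R, (b * a) * a = b * (a * a)) {x y z : R}
    (hzx : z * x = -(x * z)) (hzy : z * y = -(y * z))
    (h : (x * y) * z = -(x * (y * z))) :
    (x * y) * z = -(z * (x * y)) := by
  have h₁ := antiAssoc_swap_right alt_right hzy h
  have h₂ := antiAssoc_swap_left alt_left hzx h₁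
  have f : x * (z * y) = -(x * (y * z)) := by rw [hzy, mul_neg]
  have g : (z * x) * y = -((x * z) * y) := by rw [hzx, neg_mul]
  grind


/-- In an alternative ring in which 2 is invertible, elements
`t 0, t 1, t 2` satisfying the Cayley relations also satisfy anti-associativity
`(tᵢ*tⱼ)*tₖ = -(tᵢ*(tⱼ*tₖ))` and anti-commutativity `(tᵢ*tⱼ)*tₖ = -(tₖ*(tᵢ*tⱼ))`
for all pairwise distinct `i, j, k`. -/
theorem cayley_anti_assoc_anti_comm (R : Type*) [NonAssocRing R] [Invertible (2 : R)]
    (alt_left : ∀ a b : R, (a * a) * b = a * (a * b))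
    (alt_right : ∀ a b : R, (b * a) * a = b * (a * a))
    (t : Fin 3 → R)
    (h21 : t 1 * t 0 = -(t 0 * t 1))
    (h31 : t 2 * t 0 = -(t 0 * t 2))
    (h32 : t 2 * t 1 = -(t 1 * t 2))
    (h123 : (t 0 * t 1) * t 2 = -(t 0 * (t 1 * t 2))) :
    ∀ i j k : Fin 3, i ≠ j → j ≠ k → i ≠ k →
      (t i * t j) * t k = -(t i * (t j * t k)) ∧
      (t i * t j) * t k = -(t k * (t i * t j)) := by
  have anti : ∀ i j : Fin 3, i ≠ j → t j * t i = -(t i * t j) := by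
    intro i j hij
    fin_cases i <;> fin_cases j <;> simp_all
  have h102 := antiAssoc_swap_left alt_left h21 h123
  have h021 := antiAssoc_swap_right alt_right h32 h123
  have h120 := antiAssoc_swap_right alt_right h31 h102
  have h201 := antiAssoc_swap_left alt_left h31 h021
  have h210 := antiAssoc_swap_left alt_left h32 h120
  intro i j k hij hjk hik
  have assoc : (t i * t j) * t k = -(t i * (t j * t k)) := by
    clear anti
    fin_cases i <;> fin_cases j <;> fin_cases k <;> first | assumption | simp at hij hjk hik
  exact ⟨assoc, antiComm_of_antiAssoc alt_left alt_right (anti i k hik) (anti j k hjk) assoc⟩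
end

section
/- Let Φ be a commutative ring containing 1/2 and let R be a unital alternative Φ-algebra that is generated as a Φ-algebra by elements t1, t2, t3 satisfying the Cayley relations. Then t1*t1, t2*t2 and t3*t3 lie in the center of R. -/
/-!
Write `(a, b, c)` for the associator. In an alternative ring it is alternating, and so is the
Kleinfeld function `f(w, x, y, z) = (wx, y, z) - x (w, y, z) - (x, y, z) w`
(`kleinfeld_rotate`, `kleinfeld_swap_left`): the Teichmüller identity expresses
`f(w, x, y, z) - f(x, y, z, w) + f(y, z, w, x)` through commutators with associators, and that
expression changes sign under a cyclic shift of its arguments.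

Two consequences carry the proof.

* If `a b = -(b a)`, then `a²` commutes with `b`, and `(a², b, y) = 0` for every `y`
  (`associator_sq_of_anticomm`): skew-symmetry of `f` in its first two arguments linearizes to
  `(ab + ba, x, y) = a ∘ (b, x, y) + b ∘ (a, x, y)`, with `u ∘ v = uv + vu`, and putting `x = a`
  gives `0 = a ∘ (b, a, y) = -(a², b, y)`.
* For a fixed `z`, the elements `w` with `[z, w] = 0` and `(z, w, R) = 0` form a subalgebra
  (`associator_mul_eq_zero`, `commute_mul`). Closure under products uses the identity
  `f(w, x, y, z) = ([w, x], y, z) + ([y, z], w, x)`.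

Hence `a²` is central as soon as the ring is generated by `a` and elements anticommuting with `a`,
which is the case for each of the three Cayley generators.
-/

namespace CayleySquares

section

variable {R : Type*} [NonAssocRing R]

theorem associator_swap_left (hl : ∀ a b : R, (a * a) * b = a * (a * b)) (a b c : R) :
    associator b a c = -associator a b c := by
  have h := hl (a + b) c
  simp only [add_mul, mul_add, hl] at h
  rw [eq_neg_iff_add_eq_zero, ← sub_eq_zero.mpr h]
  simp only [associator]
  abel

theorem associator_swap_right (hr : ∀ a b : R, (b * a) * a = b * (a * a)) (a b c : R) :
    associator a c b = -associator a b c := by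
  have h := hr (b + c) a
  simp only [add_mul, mul_add, hr] at h
  rw [eq_neg_iff_add_eq_zero, ← sub_eq_zero.mpr h]
  simp only [associator]
  abel

theorem associator_cyclic (hl : ∀ a b : R, (a * a) * b = a * (a * b))
    (hr : ∀ a b : R, (b * a) * a = b * (a * a)) (a b c : R) :
    associator b c a = associator a b c := by
  rw [associator_swap_right hr b a c, associator_swap_left hl a b c, neg_neg]

/-- The Kleinfeld function, the defect in the rule
`(wx, y, z) = x (w, y, z) + (x, y, z) w`. -/
def kleinfeld (w x y z : R) : R :=
  associator (w * x) y z - x * associator w y z - associator x y z * w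

/-- The Teichmüller identity rewritten in terms of the Kleinfeld function. -/
theorem kleinfeld_teichmuller (hl : ∀ a b : R, (a * a) * b = a * (a * b))
    (hr : ∀ a b : R, (b * a) * a = b * (a * a)) (w x y z : R) :
    kleinfeld w x y z - kleinfeld x y z w + kleinfeld y z w x =
      (w * associator x y z - associator x y z * w)
      - (x * associator y z w - associator y z w * x)
      + (y * associator z w x - associator z w x * y)
      - (z * associator w x y - associator w x y * z) := by
  have h : associator (w * x) y z - associator w (x * y) z + associator w x (y * z) =
      w * associator x y z + associator w x y * z := by
    simp only [associator, mul_sub, sub_mul]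
    abel
  rw [← associator_cyclic hl hr w (x * y) z, associator_cyclic hl hr (y * z) w x] at h
  have h' : associator (w * x) y z = w * associator x y z + associator w x y * z
      + associator (x * y) z w - associator (y * z) w x := by
    rw [← h]; abel
  simp only [kleinfeld]
  rw [h', associator_cyclic hl hr w y z, associator_cyclic hl hr x z w,
    associator_cyclic hl hr y w x]
  abel

theorem kleinfeld_rotate (hl : ∀ a b : R, (a * a) * b = a * (a * b))
    (hr : ∀ a b : R, (b * a) * a = b * (a * a)) (w x y z : R) :
    kleinfeld z w x y = -kleinfeld w x y z := by
  have h := congrArg₂ (· + ·) (kleinfeld_teichmuller hl hr w x y z)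
    (kleinfeld_teichmuller hl hr x y z w)
  rw [eq_neg_iff_add_eq_zero]
  calc _ = (kleinfeld w x y z - kleinfeld x y z w + kleinfeld y z w x) +
        (kleinfeld x y z w - kleinfeld y z w x + kleinfeld z w x y) := by abel
    _ = 0 := by rw [h]; abel

theorem kleinfeld_swap_right (hr : ∀ a b : R, (b * a) * a = b * (a * a)) (w x y z : R) :
    kleinfeld w x z y = -kleinfeld w x y z := by
  simp only [kleinfeld, associator_swap_right hr _ y z, mul_neg, neg_mul]
  abel

theorem kleinfeld_swap_left (hl : ∀ a b : R, (a * a) * b = a * (a * b))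
    (hr : ∀ a b : R, (b * a) * a = b * (a * a)) (w x y z : R) :
    kleinfeld x w y z = -kleinfeld w x y z := by
  rw [← neg_neg (kleinfeld x w y z), ← kleinfeld_rotate hl hr x w y z,
    ← kleinfeld_rotate hl hr, kleinfeld_swap_right hr, kleinfeld_rotate hl hr z w x y,
    kleinfeld_rotate hl hr w x y z, neg_neg]

/-- Expanding both associators on the right by the definition of the Kleinfeld function `f` gives
`4 f` minus a sum of commutators, and that sum is `3 f` by the Teichmüller identity. -/
theorem kleinfeld_eq (hl : ∀ a b : R, (a * a) * b = a * (a * b))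
    (hr : ∀ a b : R, (b * a) * a = b * (a * a)) (w x y z : R) :
    kleinfeld w x y z =
      associator (w * x - x * w) y z + associator (y * z - z * y) w x := by
  have hsub : ∀ a b c d : R,
      associator (a - b) c d = associator a c d - associator b c d := fun a b c d => by
    simp only [associator, sub_mul]; abel
  have expand : ∀ a b c d : R, associator (a * b) c d =
      kleinfeld a b c d + b * associator a c d + associator b c d * a := fun a b c d => by
    simp only [kleinfeld]; abel
  have h1 := kleinfeld_rotate hl hr w x y z
  have h2 := kleinfeld_rotate hl hr z w x y
  have h3 := kleinfeld_rotate hl hr y z w x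
  have h4 := kleinfeld_swap_left hl hr w x y z
  have h5 := kleinfeld_swap_left hl hr y z w x
  have T := kleinfeld_teichmuller hl hr w x y z
  rw [hsub, hsub, expand, expand, expand, expand, h4, h5]
  rw [h3, h2, h1] at T
  rw [h2, h1]
  rw [← associator_cyclic hl hr w y z, ← associator_cyclic hl hr y w x,
    ← sub_eq_zero, ← sub_eq_zero.mpr T.symm]
  abel

theorem associator_sq (hl : ∀ a b : R, (a * a) * b = a * (a * b))
    (hr : ∀ a b : R, (b * a) * a = b * (a * a)) (a x y : R) :
    associator (a * a) x y = a * associator a x y + associator a x y * a := by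
  have h : kleinfeld a a x y = 0 := by
    rw [← neg_neg (kleinfeld a a x y), ← kleinfeld_rotate hl hr a a x y,
      ← kleinfeld_rotate hl hr y a a x]
    simp [kleinfeld, associator, hr]
  rw [← sub_eq_zero, ← h, kleinfeld]
  abel

theorem associator_sq_of_anticomm (hl : ∀ a b : R, (a * a) * b = a * (a * b))
    (hr : ∀ a b : R, (b * a) * a = b * (a * a)) {a b : R} (hab : a * b = -(b * a)) (y : R) :
    associator (a * a) b y = 0 := by
  have h := kleinfeld_swap_left hl hr a b a y
  have haa : associator a a y = 0 := by simp [associator, hl]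
  simp only [kleinfeld, haa, hab, mul_zero, zero_mul, associator_swap_left hl a b y] at h
  have hneg : associator (-(b * a)) a y = -associator (b * a) a y := by
    simp only [associator, neg_mul]; abel
  rw [hneg] at h
  rw [associator_sq hl hr, ← sub_eq_zero.mpr h]
  simp only [mul_neg, neg_mul]
  abel

theorem commute_sq_of_anticomm (hl : ∀ a b : R, (a * a) * b = a * (a * b))
    (hr : ∀ a b : R, (b * a) * a = b * (a * a)) {a b : R} (hab : a * b = -(b * a)) :
    (a * a) * b = b * (a * a) := by
  have h1 : (a * b) * a = a * (b * a) := by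
    refine sub_eq_zero.mp (?_ : associator a b a = 0)
    rw [associator_cyclic hl hr a a b]
    simp [associator, hl]
  rw [hl, hab, mul_neg, ← h1, hab, neg_mul, neg_neg, hr]

theorem associator_mul_eq_zero (hl : ∀ a b : R, (a * a) * b = a * (a * b))
    (hr : ∀ a b : R, (b * a) * a = b * (a * a)) {z w x : R} (hzw : z * w = w * z)
    (hw : ∀ y, associator z w y = 0) (hx : ∀ y, associator z x y = 0) (y : R) :
    associator z (w * x) y = 0 := by
  -- Both commutator terms vanish: `[z, w] = 0` and `([x, y], z, w) = (z, w, [x, y]) = 0`.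
  have hf : kleinfeld z w x y = 0 := by
    rw [kleinfeld_eq hl hr, hzw, sub_self, ← associator_cyclic hl hr (x * y - y * x) z w, hw]
    simp [associator]
  have hf' : kleinfeld w x z y = 0 := by
    rw [kleinfeld_swap_right hr, ← kleinfeld_rotate hl hr w x y z, hf]
  rw [kleinfeld, associator_swap_left hl z w, associator_swap_left hl z x, hw, hx,
    associator_swap_left hl z (w * x)] at hf'
  simpa using hf'

theorem commute_mul (hl : ∀ a b : R, (a * a) * b = a * (a * b))
    (hr : ∀ a b : R, (b * a) * a = b * (a * a)) {z w x : R} (hzw : z * w = w * z)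
    (hzx : z * x = x * z) (hw : ∀ y, associator z w y = 0) :
    z * (w * x) = (w * x) * z := by
  have h1 : (z * w) * x = z * (w * x) := sub_eq_zero.mp (hw x)
  have h2 : (w * z) * x = w * (z * x) := sub_eq_zero.mp (by
    change associator w z x = 0
    rw [associator_swap_left hl z w, hw, neg_zero])
  have h3 : (w * x) * z = w * (x * z) := sub_eq_zero.mp (by
    change associator w x z = 0
    rw [associator_cyclic hl hr z w x, hw])
  rw [← h1, hzw, h2, hzx, h3]

/-- In an alternative algebra, an element that commutes with each generator `g` and satisfies
`(z, g, R) = 0` is central. -/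
theorem mem_center_of_adjoin {Φ : Type*} [CommRing Φ] [Module Φ R] [IsScalarTower Φ R R]
    [SMulCommClass Φ R R] (hl : ∀ a b : R, (a * a) * b = a * (a * b))
    (hr : ∀ a b : R, (b * a) * a = b * (a * a)) {s : Set R}
    (hs : NonUnitalAlgebra.adjoin Φ s = ⊤) {z : R}
    (hz : ∀ g ∈ s, z * g = g * z ∧ ∀ y, associator z g y = 0) : z ∈ Set.center R := by
  have key : ∀ w : R, z * w = w * z ∧ ∀ y, associator z w y = 0 := by
    intro w
    have hw : w ∈ NonUnitalAlgebra.adjoin Φ s := hs ▸ NonUnitalAlgebra.mem_top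
    induction hw using NonUnitalAlgebra.adjoin_induction with
    | mem g hg => exact hz g hg
    | zero => simp [associator]
    | add u v _ _ hu hv =>
      refine ⟨by rw [mul_add, add_mul, hu.1, hv.1], fun y => ?_⟩
      have : associator z (u + v) y = associator z u y + associator z v y := by
        simp only [associator, mul_add, add_mul]; abel
      rw [this, hu.2, hv.2, add_zero]
    | mul u v _ _ hu hv =>
      exact ⟨commute_mul hl hr hu.1 hv.1 hu.2,
        associator_mul_eq_zero hl hr hu.1 hu.2 hv.2⟩
    | smul r u _ hu =>
      refine ⟨by rw [mul_smul_comm, smul_mul_assoc, hu.1], fun y => ?_⟩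
      have : associator z (r • u) y = r • associator z u y := by
        simp only [associator, mul_smul_comm, smul_mul_assoc, smul_sub]
      rw [this, hu.2, smul_zero]
  refine ⟨fun w => (key w).1, fun b c => (sub_eq_zero.mp ((key b).2 c)).symm, fun a b => ?_⟩
  refine sub_eq_zero.mp (?_ : associator a b z = 0)
  rw [associator_cyclic hl hr z a b, (key a).2]

/-- In an alternative algebra generated by `1`, `a` and elements anticommuting with `a`, the square
of `a` is central. -/
theorem sq_mem_center {Φ : Type*} [CommRing Φ] [Module Φ R] [IsScalarTower Φ R R]
    [SMulCommClass Φ R R] (hl : ∀ a b : R, (a * a) * b = a * (a * b))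
    (hr : ∀ a b : R, (b * a) * a = b * (a * a)) {s : Set R}
    (hs : NonUnitalAlgebra.adjoin Φ s = ⊤) {a : R}
    (ha : ∀ g ∈ s, g = 1 ∨ g = a ∨ a * g = -(g * a)) : a * a ∈ Set.center R := by
  refine mem_center_of_adjoin hl hr hs fun g hg => ?_
  rcases ha g hg with rfl | rfl | h
  · simp [associator]
  · refine ⟨hl g g, fun y => ?_⟩
    have h0 : associator g g y = 0 := by simp [associator, hl]
    rw [associator_sq hl hr, h0, mul_zero, zero_mul, add_zero]
  · exact ⟨commute_sq_of_anticomm hl hr h, associator_sq_of_anticomm hl hr h⟩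

end

end CayleySquares

/-- Let `Φ` be a commutative ring containing `1/2` and `R` a unital
alternative `Φ`-algebra generated (as a unital `Φ`-algebra) by elements `t1, t2, t3`
satisfying the Cayley relations.  Then `t1*t1`, `t2*t2` and `t3*t3` lie in the
center of `R` (the nonassociative center: commuting and associating with everything). -/
theorem cayley_squares_central (Φ : Type*) [CommRing Φ] [Invertible (2 : Φ)]
    (R : Type*) [NonAssocRing R] [Module Φ R] [IsScalarTower Φ R R] [SMulCommClass Φ R R]
    (alt_left : ∀ a b : R, (a * a) * b = a * (a * b))
    (alt_right : ∀ a b : R, (b * a) * a = b * (a * a))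
    (t1 t2 t3 : R)
    (hgen : NonUnitalAlgebra.adjoin Φ ({1, t1, t2, t3} : Set R) = ⊤)
    (h21 : t2 * t1 = -(t1 * t2))
    (h31 : t3 * t1 = -(t1 * t3))
    (h32 : t3 * t2 = -(t2 * t3))
    (h123 : (t1 * t2) * t3 = -(t1 * (t2 * t3))) :
    t1 * t1 ∈ Set.center R ∧ t2 * t2 ∈ Set.center R ∧ t3 * t3 ∈ Set.center R := by
  have h12 : t1 * t2 = -(t2 * t1) := by rw [h21, neg_neg]
  have h13 : t1 * t3 = -(t3 * t1) := by rw [h31, neg_neg]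
  have h23 : t2 * t3 = -(t3 * t2) := by rw [h32, neg_neg]
  refine ⟨CayleySquares.sq_mem_center alt_left alt_right hgen ?_,
    CayleySquares.sq_mem_center alt_left alt_right hgen ?_,
    CayleySquares.sq_mem_center alt_left alt_right hgen ?_⟩
  all_goals
    rintro g (rfl | rfl | rfl | rfl) <;> tauto
end

section
/- Let R be an alternative ring in which 2 is invertible, and let t1, t2, t3 ∈ R satisfy the Cayley relations. Then (t1*t2)*(t1*t2) = -((t1*t1)*(t2*t2)), (t1*t3)*(t1*t3) = -((t1*t1)*(t3*t3)), (t2*t3)*(t2*t3) = -((t2*t2)*(t3*t3)), and (t1*(t2*t3))*(t1*(t2*t3)) = (t1*t1)*((t2*t2)*(t3*t3)). -/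
/-!
Everything follows from one fact (`sq_mul_of_anticomm`): in an alternative ring, if `a` and `b`
anticommute then `(ab)² = -(a²b²)`. Indeed the associator `[a, ab, b]` vanishes, both bracketings
being `a²b²`, so by antisymmetry `[ab, a, b]` vanishes as well, and
`(ab)(ab) = ((ab)a)b = -((a²)b)b = -(a²b²)`.

The first three identities apply this to pairs of the `tᵢ`. For the last one it is applied to `t1`
and `t2 * t3`, which anticommute: comparing the associators of permutations of `t1, t2, t3`, which
agree up to sign, expresses `(t2 * t3) * t1` through `t1 * (t2 * t3)`. No division by 2 occurs.
-/

/-- The associator is antisymmetric in its first two arguments: polarization of the left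
alternative law. -/
theorem alt_left_polarized {R : Type*} [NonAssocRing R]
    (alt_left : ∀ a b : R, (a * a) * b = a * (a * b)) (x y z : R) :
    (x * y) * z + (y * x) * z = x * (y * z) + y * (x * z) := by
  have h := alt_left (x + y) z
  simp only [add_mul, mul_add, alt_left] at h
  rw [← sub_eq_zero] at h ⊢
  rw [← h]
  abel

/-- The associator is antisymmetric in its last two arguments: polarization of the right
alternative law. -/
theorem alt_right_polarized {R : Type*} [NonAssocRing R]
    (alt_right : ∀ a b : R, (b * a) * a = b * (a * a)) (x y z : R) :
    (x * y) * z + (x * z) * y = x * (y * z) + x * (z * y) := by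
  have h := alt_right (y + z) x
  simp only [add_mul, mul_add, alt_right] at h
  rw [← sub_eq_zero] at h ⊢
  rw [← h]
  abel

theorem sq_mul_of_anticomm {R : Type*} [NonAssocRing R]
    (alt_left : ∀ a b : R, (a * a) * b = a * (a * b))
    (alt_right : ∀ a b : R, (b * a) * a = b * (a * a))
    (a b : R) (h : b * a = -(a * b)) :
    (a * b) * (a * b) = -((a * a) * (b * b)) := by
  -- `[a, ab, b] = 0`, hence `[ab, a, b] = 0`
  have h1 : (a * (a * b)) * b = a * ((a * b) * b) := by
    rw [← alt_left, alt_right, alt_right, alt_left]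
  have h2 := alt_left_polarized alt_left a (a * b) b
  rw [h1] at h2
  have h3 : ((a * b) * a) * b = (a * b) * (a * b) := add_left_cancel h2
  -- from the flexible law `(ab)a = a(ba)` and anticommutation
  have h4 : (a * b) * a = -((a * a) * b) := by
    have h5 := alt_left_polarized alt_left a b a
    have h6 : (b * a) * a = b * (a * a) := alt_right a b
    rw [h6] at h5
    rw [add_right_cancel h5, h, mul_neg, alt_left]
  rw [← h3, h4, neg_mul, alt_right]

/-- The Cayley relations make `t1` anticommute with the product `t2 * t3`. -/
theorem cayley_anticomm_mul {R : Type*} [NonAssocRing R]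
    (alt_left : ∀ a b : R, (a * a) * b = a * (a * b))
    (alt_right : ∀ a b : R, (b * a) * a = b * (a * a))
    (t1 t2 t3 : R)
    (h21 : t2 * t1 = -(t1 * t2))
    (h31 : t3 * t1 = -(t1 * t3))
    (h123 : (t1 * t2) * t3 = -(t1 * (t2 * t3))) :
    (t2 * t3) * t1 = -(t1 * (t2 * t3)) := by
  have e1 := alt_left_polarized alt_left t1 t2 t3
  rw [h21, neg_mul, add_neg_cancel] at e1
  have e2 := alt_right_polarized alt_right t2 t3 t1
  rw [h31, h21, neg_mul, mul_neg, neg_add_cancel, h123, neg_neg] at e2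
  exact eq_neg_of_add_eq_zero_left e2

/-- In an alternative ring in which 2 is invertible, if `t1, t2, t3`
satisfy the Cayley relations, then `(t1*t2)² = -(t1²*t2²)`, `(t1*t3)² = -(t1²*t3²)`,
`(t2*t3)² = -(t2²*t3²)` and `(t1*(t2*t3))² = t1²*(t2²*t3²)`. -/
theorem cayley_products_squares (R : Type*) [NonAssocRing R] [Invertible (2 : R)]
    (alt_left : ∀ a b : R, (a * a) * b = a * (a * b))
    (alt_right : ∀ a b : R, (b * a) * a = b * (a * a))
    (t1 t2 t3 : R)
    (h21 : t2 * t1 = -(t1 * t2))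
    (h31 : t3 * t1 = -(t1 * t3))
    (h32 : t3 * t2 = -(t2 * t3))
    (h123 : (t1 * t2) * t3 = -(t1 * (t2 * t3))) :
    (t1 * t2) * (t1 * t2) = -((t1 * t1) * (t2 * t2)) ∧
    (t1 * t3) * (t1 * t3) = -((t1 * t1) * (t3 * t3)) ∧
    (t2 * t3) * (t2 * t3) = -((t2 * t2) * (t3 * t3)) ∧
    (t1 * (t2 * t3)) * (t1 * (t2 * t3)) = (t1 * t1) * ((t2 * t2) * (t3 * t3)) := by
  have key := sq_mul_of_anticomm alt_left alt_right
  refine ⟨key t1 t2 h21, key t1 t3 h31, key t2 t3 h32, ?_⟩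
  rw [key t1 (t2 * t3) (cayley_anticomm_mul alt_left alt_right t1 t2 t3 h21 h31 h123),
    key t2 t3 h32, mul_neg, neg_neg]
end

section
/- Let R be an alternative ring in which 2 is invertible, and let t1, t2, t3 ∈ R satisfy the Cayley relations. Let w be an element of the free magma on three generators x1, x2, x3 (i.e. a nonempty, arbitrarily parenthesized word) containing ℓ occurrences of x1, m occurrences of x2 and n occurrences of x3. Then the evaluation of w at (t1, t2, t3) equals ε * ((t1*t1)^p * ((t2*t2)^q * ((t3*t3)^r * b))) for some sign ε ∈ {1, -1}, where p = ⌊ℓ/2⌋, q = ⌊m/2⌋, r = ⌊n/2⌋ (powers of a single element are unambiguous in an alternative ring), and b is the monomial obtained as the product, in the order t1, t2, t3 and parenthesized as (t1*t2)*t3, of those ti whose occurrence count (ℓ, m or n respectively) is odd, with the empty product equal to 1. -/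
/-!
Write `L i` for left multiplication by `t i`. Linearizing the left alternative law gives
`x (y z) + y (x z) = (x y + y x) z`, so the operators `L 0, L 1, L 2` anticommute on all of `R`.
Hence the left-normed monomials `u d = L 0 ^ d 0 (L 1 ^ d 1 (L 2 ^ d 2 1))` satisfy
`t i * u d = ± u (d + e i)`, with a sign depending only on the parities of `d`.

The heart of the matter is the multiplication rule `u f * u h = S f h • u (f + h)`, where `S` is
the cocycle which presents the octonions as a twisted group algebra of `(ℤ/2)³` (`CayleyNF.P_all`).
It is proved by induction on the total degree of `f + h`. Modulo the rule in smaller degrees, each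
linearized alternative law is a linear relation between products of the same total degree:

* `u f * t i` is obtained from flexibility, and from the Cayley relations when the exponents of `f`
  are too small for flexibility to apply;
* if `u f` anticommutes with `t i`, then `u f * (t i * y) = -(t i * (u f * y))`, and dually;
* what is left is the case that `f` or `h` involves one generator only, where power associativity
  suffices, and the case that all exponents are even, where the relation determines
  `2 • (u f * u h)`.

By this rule every word in the `t i` is `±` the monomial `u` of its occurrence counts, and so is the
stated normal form.
-/

/-- The number of occurrences of the generator `a` in a word of the free magma. -/
def FreeMagma.occ {α : Type*} [DecidableEq α] (a : α) : FreeMagma α → ℕ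
  | FreeMagma.of b => if b = a then 1 else 0
  | FreeMagma.mul x y => FreeMagma.occ a x + FreeMagma.occ a y

/-- Left-iterated power `x^n` in a (possibly nonassociative) unital magma; in an
alternative ring powers of a single element are unambiguous. -/
def npowLeft {R : Type*} [One R] [Mul R] (x : R) : ℕ → R
  | 0 => 1
  | n + 1 => x * npowLeft x n

namespace CayleyNF

/-! ### Signs -/

/-- The sign character of `ℤ/2`. -/
def sgn (z : ZMod 2) : ℤ := if z = 0 then 1 else -1

/-- The octonion cocycle on `(ℤ/2)³`, normalized to the left-normed basis and to `t i * t i`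
having sign `+1`: the quadratic part records reordering of anticommuting generators, the cubic
part the failure of associativity. -/
def S (x y : Fin 3 → ZMod 2) : ℤ :=
  sgn (x 1 * y 0 + x 2 * y 0 + x 2 * y 1 + y 0 * x 1 * x 2 + x 0 * y 1 * x 2 + x 0 * x 1 * y 2)

/-- The exponent vector of the `i`-th generator. -/
def e (i : Fin 3) : Fin 3 → ℕ := Pi.single i 1

/-- The parities of an exponent vector. -/
def par (f : Fin 3 → ℕ) : Fin 3 → ZMod 2 := fun i => (f i : ZMod 2)

/-- The parity vector of the `i`-th generator. -/
def E (i : Fin 3) : Fin 3 → ZMod 2 := Pi.single i 1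

/-- The total degree of an exponent vector. -/
def deg (f : Fin 3 → ℕ) : ℕ := f 0 + f 1 + f 2

lemma par_add (f g : Fin 3 → ℕ) : par (f + g) = par f + par g := by
  funext i; simp [par]

lemma par_e (i : Fin 3) : par (e i) = E i := by
  funext j; fin_cases i <;> fin_cases j <;> simp [par, e, E]

lemma par_zero : par 0 = 0 := by
  funext i; simp [par]

lemma deg_add (f g : Fin 3 → ℕ) : deg (f + g) = deg f + deg g := by
  simp only [deg, Pi.add_apply]; omega

lemma deg_e (i : Fin 3) : deg (e i) = 1 := by
  fin_cases i <;> simp [deg, e]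

lemma eq_zero_of_deg {f : Fin 3 → ℕ} (hf : deg f = 0) : f = 0 := by
  funext i
  simp only [deg] at hf
  fin_cases i <;> simp <;> omega

lemma exists_pos {f : Fin 3 → ℕ} (hf : f ≠ 0) : ∃ i, 0 < f i := by
  by_contra! h
  exact hf (funext fun i => by simpa using h i)

lemma exists_split {f : Fin 3 → ℕ} {i : Fin 3} (hf : 0 < f i) : ∃ g, f = e i + g := by
  refine ⟨fun j => f j - e i j, funext fun j => ?_⟩
  by_cases h : j = i
  · subst h; simp [e]; omega
  · simp [e, h]

lemma eq_smul_e {f : Fin 3 → ℕ} {i : Fin 3} (hf : ∀ j, j ≠ i → f j = 0) : f = f i • e i := by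
  funext j
  by_cases h : j = i
  · subst h; simp [e]
  · simp [e, h, hf j h]

lemma S_zero_left (y : Fin 3 → ZMod 2) : S 0 y = 1 := by simp [S, sgn]

lemma S_zero_right (x : Fin 3 → ZMod 2) : S x 0 = 1 := by simp [S, sgn]

lemma sgn_or (z : ZMod 2) : sgn z = 1 ∨ sgn z = -1 := by revert z; decide

lemma S_or (x y : Fin 3 → ZMod 2) : S x y = 1 ∨ S x y = -1 := sgn_or _

lemma S_sq (x y : Fin 3 → ZMod 2) : S x y * S x y = 1 := by
  rcases S_or x y with h | h <;> simp [h]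

lemma S_same (l : Fin 3) (x : Fin 3 → ZMod 2) :
    S (E l + x) (E l) = S (E l) x * (S x (E l) * S (E l) (x + E l)) := by
  revert l x; decide +kernel

lemma S_flex (i j : Fin 3) (x : Fin 3 → ZMod 2) :
    S (E j) x * S (E j + x) (E i) + S (E i) x * S (E i + x) (E j)
      = S x (E i) * S (E j) (x + E i) + S x (E j) * S (E i) (x + E j) := by
  revert i j x; decide +kernel

lemma S_left (i : Fin 3) (x y : Fin 3 → ZMod 2) :
    S (E i) x * S (E i + x) y + S x (E i) * S (x + E i) y
      = S x y * S (E i) (x + y) + S (E i) y * S x (E i + y) := by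
  revert i x y; decide +kernel

lemma S_right (i : Fin 3) (x y : Fin 3 → ZMod 2) :
    S x (E i) * S (x + E i) y + S x y * S (x + y) (E i)
      = S (E i) y * S x (E i + y) + S y (E i) * S x (y + E i) := by
  revert i x y; decide +kernel

lemma S_pow_left (l : Fin 3) (x y : Fin 3 → ZMod 2) (hx : x = 0 ∨ x = E l) :
    S (E l + x) y = S x y * S (E l) (x + y) := by
  revert l x y; decide +kernel

lemma S_pow_right (l : Fin 3) (x y : Fin 3 → ZMod 2) (hy : y = 0 ∨ y = E l) :
    S x (E l + y) = S x y * S (x + y) (E l) := by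
  revert l x y; decide +kernel

/-- Distinct nontrivial basis elements anticommute. -/
lemma S_anti (i : Fin 3) (x : Fin 3 → ZMod 2) (h0 : x ≠ 0) (hi : x ≠ E i) :
    S x (E i) = -S (E i) x := by
  revert i x; decide +kernel

lemma S_comm_self (i : Fin 3) (x : Fin 3 → ZMod 2) (h : E i + x = 0) :
    S x (E i) = S (E i) x ∧ x = E i := by
  revert i x; decide +kernel

lemma E_inj {i j : Fin 3} (h : E i = E j) : i = j := by
  revert i j; decide +kernel

lemma E_ne_zero (i : Fin 3) : E i ≠ 0 := by
  revert i; decide +kernel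

lemma par_smul_e (n : ℕ) (l : Fin 3) : par (n • e l) = 0 ∨ par (n • e l) = E l := by
  induction n with
  | zero => left; simp [par_zero]
  | succ n ih =>
    rw [succ_nsmul, par_add, par_e]
    rcases ih with h | h
    · right; rw [h, zero_add]
    · left; rw [h]; clear h; revert l; decide +kernel

/-! ### Alternative rings -/

variable {R : Type*} [NonAssocRing R]

/-- The standing hypotheses: an alternative ring without 2-torsion, and a triple which satisfies
the Cayley relations. -/
structure IsCayley (t : Fin 3 → R) : Prop where
  altL : ∀ a b : R, (a * a) * b = a * (a * b)
  altR : ∀ a b : R, (b * a) * a = b * (a * a)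
  cancel : ∀ x y : R, x + x = y + y → x = y
  h21 : t 1 * t 0 = -(t 0 * t 1)
  h31 : t 2 * t 0 = -(t 0 * t 2)
  h32 : t 2 * t 1 = -(t 1 * t 2)
  h123 : (t 0 * t 1) * t 2 = -(t 0 * (t 1 * t 2))

/-- The left-normed monomial with exponent vector `f`. -/
def u (t : Fin 3 → R) (f : Fin 3 → ℕ) : R :=
  (t 0 * ·)^[f 0] ((t 1 * ·)^[f 1] ((t 2 * ·)^[f 2] 1))

namespace IsCayley

variable {t : Fin 3 → R}

lemma linL (C : IsCayley t) (x y z : R) :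
    (x * y) * z + (y * x) * z = x * (y * z) + y * (x * z) := by
  have h := C.altL (x + y) z
  simp only [add_mul, mul_add, C.altL] at h
  linear_combination (norm := abel) h

lemma linR (C : IsCayley t) (x y z : R) :
    (x * y) * z + (x * z) * y = x * (y * z) + x * (z * y) := by
  have h := C.altR (y + z) x
  simp only [add_mul, mul_add, C.altR] at h
  linear_combination (norm := abel) h

lemma flex (C : IsCayley t) (x y z : R) :
    (x * y) * z + (z * y) * x = x * (y * z) + z * (y * x) := by
  have h1 := C.linL x y z
  have h2 := C.linR y x z
  have h3 := C.linL z y x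
  linear_combination (norm := abel) h1 + h3 - h2

lemma flex_self (C : IsCayley t) (x y : R) : (x * y) * x = x * (y * x) :=
  C.cancel _ _ (C.flex x y x)

/-- Left multiplication by a power is the power of left multiplication. -/
lemma npow_mul (C : IsCayley t) (x : R) (n : ℕ) (y : R) :
    npowLeft x n * y = (x * ·)^[n] y := by
  induction n generalizing y with
  | zero => simp [npowLeft]
  | succ n ih =>
    have hc : npowLeft x n * x = x * npowLeft x n := by
      have h1 : (x * ·)^[n] x = (x * ·)^[n + 1] (1 : R) := by
        rw [Function.iterate_succ_apply]; simp
      rw [ih, h1, Function.iterate_succ_apply', ← ih]; simp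
    have h := C.linL x (npowLeft x n) y
    rw [hc, ih, ih, ← Function.iterate_succ_apply (x * ·) n y,
      ← Function.iterate_succ_apply' (x * ·) n y] at h
    exact C.cancel _ _ h

lemma npow_succ_mul (C : IsCayley t) (x : R) (n : ℕ) (y : R) :
    npowLeft x (n + 1) * y = x * (npowLeft x n * y) := by
  rw [C.npow_mul, C.npow_mul, Function.iterate_succ_apply']

lemma npow_comm (C : IsCayley t) (x : R) (n : ℕ) : npowLeft x n * x = x * npowLeft x n := by
  induction n with
  | zero => simp [npowLeft]
  | succ n ih => rw [C.npow_succ_mul, ih]; rfl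

lemma mul_npow (C : IsCayley t) (x : R) (n : ℕ) (y : R) :
    y * npowLeft x n = (· * x)^[n] y := by
  induction n generalizing y with
  | zero => simp [npowLeft]
  | succ n ih =>
    have h := C.linR y x (npowLeft x n)
    rw [C.npow_comm, ih, ih, ← Function.iterate_succ_apply (· * x) n y,
      ← Function.iterate_succ_apply' (· * x) n y] at h
    exact C.cancel _ _ h.symm

lemma mul_npow_succ (C : IsCayley t) (x : R) (n : ℕ) (y : R) :
    y * npowLeft x (n + 1) = (y * npowLeft x n) * x := by
  rw [C.mul_npow, C.mul_npow, Function.iterate_succ_apply']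

/-! ### Left-normed monomials -/

/-- Left multiplications by anticommuting elements anticommute. -/
lemma anti_iter (C : IsCayley t) {x y : R} (hxy : y * x = -(x * y)) (n : ℕ) (z : R) :
    y * (x * ·)^[n] z = sgn (n : ZMod 2) • (x * ·)^[n] (y * z) := by
  induction n with
  | zero => simp [sgn]
  | succ n ih =>
    have hs : sgn ((n + 1 : ℕ) : ZMod 2) = -sgn (n : ZMod 2) := by
      push_cast; generalize (n : ZMod 2) = a; revert a; decide
    have h := C.linL x y ((x * ·)^[n] z)
    rw [hxy, neg_mul, add_neg_cancel] at h
    rw [Function.iterate_succ_apply', Function.iterate_succ_apply', hs, neg_smul,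
      ← mul_smul_comm, ← ih]
    exact eq_neg_of_add_eq_zero_right h.symm

lemma iter_smul (x : R) (n : ℕ) (c : ℤ) (z : R) :
    (x * ·)^[n] (c • z) = c • (x * ·)^[n] z := by
  induction n with
  | zero => simp
  | succ n ih => rw [Function.iterate_succ_apply', Function.iterate_succ_apply', ih, mul_smul_comm]

lemma gen_mul (C : IsCayley t) (i : Fin 3) (f : Fin 3 → ℕ) :
    t i * u t f = S (E i) (par f) • u t (e i + f) := by
  fin_cases i
  · simp [u, S, E, e, sgn, add_comm 1, Function.iterate_succ_apply', -Function.iterate_succ]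
  · simp [u, S, E, e, par, add_comm 1, Function.iterate_succ_apply', C.anti_iter C.h21,
      -Function.iterate_succ]
  · have hs : ∀ a b : ZMod 2, sgn (a + b) = sgn a * sgn b := by decide
    simp [u, S, E, e, par, add_comm 1, Function.iterate_succ_apply', C.anti_iter C.h31,
      C.anti_iter C.h32, iter_smul, mul_smul, hs, -zsmul_eq_mul, -Function.iterate_succ]

lemma u_zero : u t 0 = 1 := by simp [u]

lemma u_e (i : Fin 3) : u t (e i) = t i := by
  fin_cases i <;> simp [u, e]

lemma u_add_e (C : IsCayley t) (i : Fin 3) (f : Fin 3 → ℕ) :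
    u t (e i + f) = S (E i) (par f) • (t i * u t f) := by
  rw [C.gen_mul, smul_smul, S_sq, one_smul]

lemma u_smul_e (n : ℕ) (l : Fin 3) : u t (n • e l) = npowLeft (t l) n := by
  have h : ∀ n : ℕ, npowLeft (t l) n = (t l * ·)^[n] 1 := by
    intro n
    induction n with
    | zero => rfl
    | succ n ih => rw [Function.iterate_succ_apply', ← ih]; rfl
  rw [h]
  fin_cases l <;> simp [u, e]

/-! ### The multiplication rule -/

/-- The multiplication rule for the monomials with exponent vectors `f` and `h`. -/
def P (t : Fin 3 → R) (f h : Fin 3 → ℕ) : Prop :=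
  u t f * u t h = S (par f) (par h) • u t (f + h)

lemma P_zero_left (h : Fin 3 → ℕ) : P t 0 h := by
  simp [P, u_zero, par_zero, S_zero_left]

lemma P_zero_right (f : Fin 3 → ℕ) : P t f 0 := by
  simp [P, u_zero, par_zero, S_zero_right]

lemma P_gen (C : IsCayley t) (i : Fin 3) (h : Fin 3 → ℕ) : P t (e i) h := by
  rw [P, u_e, par_e, C.gen_mul]

lemma P_same (C : IsCayley t) {l : Fin 3} {f : Fin 3 → ℕ} (A : P t f (e l)) :
    P t (e l + f) (e l) := by
  rw [P, u_e, par_e] at *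
  rw [C.u_add_e, smul_mul_assoc, C.flex_self, A, mul_smul_comm, C.gen_mul, smul_smul, smul_smul,
    par_add, par_add, par_e, S_same, add_assoc, mul_assoc]

/-- Flexibility determines one of two products of monomials by generators from the other. -/
lemma P_flex (C : IsCayley t) {i j : Fin 3} {f : Fin 3 → ℕ} (A : P t f (e i)) (B : P t f (e j))
    (D : P t (e i + f) (e j)) : P t (e j + f) (e i) := by
  rw [P, u_e, par_e] at *
  have h := C.flex (t j) (u t f) (t i)
  have hs := S_flex i j (par f)
  have h1 : e i + f + e j = e j + f + e i := by abel
  have h2 : e j + (f + e i) = e j + f + e i := by abel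
  have h3 : e i + (f + e j) = e j + f + e i := by abel
  simp only [A, B, C.gen_mul, smul_mul_assoc, mul_smul_comm, D, smul_smul, par_add, par_e,
    h1, h2, h3, ← add_smul] at h ⊢
  rw [← hs, add_smul, add_left_inj] at h
  have h4 := congrArg (fun z => S (E j) (par f) • z) h
  simpa only [smul_smul, ← mul_assoc, S_sq, one_mul, one_smul] using h4

/-- If `u f` anticommutes with `t i`, then left multiplication by `u f` anticommutes with left
multiplication by `t i`. -/
lemma P_antiL (C : IsCayley t) {i : Fin 3} {f h : Fin 3 → ℕ} (A : P t f (e i)) (B : P t f h)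
    (hs : S (par f) (E i) = -S (E i) (par f)) : P t f (e i + h) := by
  rw [P] at *
  rw [u_e, par_e] at A
  have k := C.linL (t i) (u t f) (u t h)
  have ks := S_left i (par f) (par h)
  have h1 : e i + (f + h) = f + (e i + h) := by abel
  have h2 : par f + E i = E i + par f := add_comm _ _
  have h3 : f + e i = e i + f := add_comm _ _
  simp only [A, B, C.gen_mul, smul_mul_assoc, mul_smul_comm, smul_smul, par_add, par_e,
    h1, h2, h3, hs, neg_smul, neg_mul, add_neg_cancel] at k ks ⊢
  have k2 := eq_neg_of_add_eq_zero_right k.symm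
  have ks2 := eq_neg_of_add_eq_zero_right ks.symm
  rw [← neg_smul, ← ks2] at k2
  have h4 := congrArg (fun z => S (E i) (par h) • z) k2
  simpa only [smul_smul, ← mul_assoc, S_sq, one_mul, one_smul] using h4

/-- The mirror image of `P_antiL`. -/
lemma P_antiR (C : IsCayley t) {j : Fin 3} {f h : Fin 3 → ℕ} (A : P t f (e j)) (B : P t f h)
    (D : P t (f + h) (e j)) (G : P t h (e j))
    (hs : S (par h) (E j) = -S (E j) (par h)) : P t (e j + f) h := by
  rw [P] at *
  rw [u_e, par_e] at A D G
  have k := C.linR (u t f) (t j) (u t h)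
  have ks := S_right j (par f) (par h)
  have h1 : f + h + e j = e j + f + h := by abel
  have h2 : par h + E j = E j + par h := add_comm _ _
  have h2' : par f + E j = E j + par f := add_comm _ _
  have h3 : h + e j = e j + h := add_comm _ _
  have h3' : f + e j = e j + f := add_comm _ _
  simp only [A, B, D, G, C.gen_mul, smul_mul_assoc, mul_smul_comm, smul_smul, par_add, par_e,
    h1, h2, h2', h3, h3', hs, neg_smul, neg_mul, mul_neg,
    add_neg_cancel] at k ks ⊢
  have k2 := eq_neg_of_add_eq_zero_left k
  have ks2 := eq_neg_of_add_eq_zero_left ks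
  rw [← neg_smul, ← ks2] at k2
  have h4 := congrArg (fun z => S (par f) (E j) • z) k2
  simpa only [smul_smul, ← mul_assoc, S_sq, one_mul, one_smul] using h4

lemma P_powL (C : IsCayley t) {l : Fin 3} {n : ℕ} {h : Fin 3 → ℕ} (A : P t (n • e l) h) :
    P t (e l + n • e l) h := by
  rw [P] at *
  have h1 : e l + n • e l = (n + 1) • e l := by rw [succ_nsmul, add_comm]
  have hs := S_pow_left l (par (n • e l)) (par h) (par_smul_e n l)
  have k : u t (e l + n • e l) * u t h = t l * (u t (n • e l) * u t h) := by
    rw [h1, u_smul_e, u_smul_e, C.npow_succ_mul]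
  rw [k, A, mul_smul_comm, C.gen_mul, smul_smul, par_add, par_add, par_e, hs, add_assoc]

lemma P_powR (C : IsCayley t) {l : Fin 3} {n : ℕ} {f : Fin 3 → ℕ} (A : P t f (n • e l))
    (B : P t (f + n • e l) (e l)) : P t f (e l + n • e l) := by
  rw [P] at *
  rw [u_e, par_e] at B
  have h1 : e l + n • e l = (n + 1) • e l := by rw [succ_nsmul, add_comm]
  have h2 : f + n • e l + e l = f + (e l + n • e l) := by abel
  have hs := S_pow_right l (par f) (par (n • e l)) (par_smul_e n l)
  have k : u t f * u t (e l + n • e l) = (u t f * u t (n • e l)) * t l := by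
    rw [h1, u_smul_e, u_smul_e, C.mul_npow_succ]
  rw [k, A, smul_mul_assoc, B, smul_smul, h2, par_add, par_add, par_e, hs]

/-- If `u f` commutes with `t i`, the linearized left alternative law determines twice the
product of `u (e i + f)` and `u h`. -/
lemma P_comm (C : IsCayley t) {i : Fin 3} {f h : Fin 3 → ℕ} (A : P t f (e i)) (B : P t f h)
    (D : P t f (e i + h)) (hs : S (par f) (E i) = S (E i) (par f)) : P t (e i + f) h := by
  rw [P] at *
  rw [u_e, par_e] at A
  have k := C.linL (t i) (u t f) (u t h)
  have ks := S_left i (par f) (par h)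
  have h1 : e i + (f + h) = e i + f + h := by abel
  have h1' : f + (e i + h) = e i + f + h := by abel
  have h2 : par f + E i = E i + par f := add_comm _ _
  have h3 : f + e i = e i + f := add_comm _ _
  simp only [A, B, D, C.gen_mul, smul_mul_assoc, mul_smul_comm, smul_smul, par_add, par_e,
    h1, h1', h2, h3, hs] at k ks ⊢
  rw [← add_smul, ← add_smul, ← ks, add_smul, add_smul] at k
  have k2 := C.cancel _ _ k
  have h4 := congrArg (fun z => S (E i) (par f) • z) k2
  simpa only [smul_smul, ← mul_assoc, S_sq, one_mul, one_smul] using h4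

lemma P_012 (C : IsCayley t) : P t (e 0 + e 1) (e 2) := by
  have h := C.h123
  have h01 := C.gen_mul 0 (e 1)
  have h12 := C.gen_mul 1 (e 2)
  have s1 : S (E 0) (E 1) = 1 := by decide +kernel
  have s2 : S (E 1) (E 2) = 1 := by decide +kernel
  have s3 : S (E 0) (E 1 + E 2) = 1 := by decide +kernel
  have s4 : S (E 0 + E 1) (E 2) = -1 := by decide +kernel
  simp only [u_e, par_e, s1, s2, one_smul] at h01 h12
  rw [h01, h12, C.gen_mul, par_add, par_e, par_e, s3, one_smul] at h
  rw [P, u_e, par_add, par_e, par_e, par_e, s4, h, neg_smul, one_smul, add_assoc]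

lemma P_210 (C : IsCayley t) : P t (e 2 + e 1) (e 0) :=
  C.P_flex (C.P_gen _ _) (C.P_gen _ _) C.P_012

lemma P_021 (C : IsCayley t) : P t (e 0 + e 2) (e 1) :=
  C.P_flex (C.P_gen _ _) (C.P_gen _ _) (by rw [add_comm]; exact C.P_210)

/-- Right multiplication by `t i` of a squarefree monomial in the other two generators: the case
which rests on the fourth Cayley relation, through `P_012`. -/
lemma P_small (C : IsCayley t) (i : Fin 3) (f : Fin 3 → ℕ) (hi : f i = 0) (hf : ∀ j, f j ≤ 1) :
    P t f (e i) := by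
  have hx : ∀ j, f j = 0 ∨ f j = 1 := fun j => by have := hf j; omega
  have hfe : f = f 0 • e 0 + f 1 • e 1 + f 2 • e 2 := by
    funext j; fin_cases j <;> simp [e]
  have a := C.P_012
  have b := C.P_210
  have c := C.P_021
  have b' := b
  rw [add_comm] at b'
  rcases hx 0 with h0 | h0 <;> rcases hx 1 with h1 | h1 <;> rcases hx 2 with h2 | h2 <;>
    rw [h0, h1, h2] at hfe <;> simp only [zero_smul, one_smul, zero_add, add_zero] at hfe <;>
    rw [hfe] <;>
    first
      | exact P_zero_left _
      | exact C.P_gen _ _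
      | (fin_cases i <;> first | assumption | simp_all)

/-- The multiplication rule when the right factor is a generator. -/
lemma P_right (C : IsCayley t) (N : ℕ) (i : Fin 3) (f : Fin 3 → ℕ) (hN : deg f = N) :
    P t f (e i) := by
  induction N using Nat.strong_induction_on generalizing i f with
  | _ N ih =>
  by_cases hi : 0 < f i
  · obtain ⟨g, rfl⟩ := exists_split hi
    rw [deg_add, deg_e] at hN
    exact C.P_same (ih (deg g) (by omega) i g rfl)
  by_cases hj : ∃ j, 2 ≤ f j
  · obtain ⟨j, hj⟩ := hj
    obtain ⟨g, rfl⟩ := exists_split (show 0 < f j by omega)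
    have hg : 0 < g j := by simp [e] at hj; omega
    obtain ⟨k, rfl⟩ := exists_split hg
    simp only [deg_add, deg_e] at hN
    have hd : deg (e j + k) < N := by rw [deg_add, deg_e]; omega
    have hd' : deg (e i + k) < N := by rw [deg_add, deg_e]; omega
    refine C.P_flex (ih _ hd i _ rfl) (ih _ hd j _ rfl) ?_
    rw [add_left_comm]
    exact C.P_same (ih _ hd' j _ rfl)
  · push Not at hj
    exact C.P_small i f (by omega) fun j => by have := hj j; omega

/-- Monomials multiply as in the octonions, up to the central squares, which the exponents record. -/
theorem P_all (C : IsCayley t) (N : ℕ) (f h : Fin 3 → ℕ) (hN : deg f + deg h = N) :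
    P t f h := by
  induction N using Nat.strong_induction_on generalizing f h with
  | _ N ih =>
  have right : ∀ (f : Fin 3 → ℕ) (i : Fin 3), P t f (e i) := fun f i => C.P_right _ i f rfl
  by_cases hf0 : f = 0
  · subst hf0; exact P_zero_left _
  by_cases hh0 : h = 0
  · subst hh0; exact P_zero_right _
  have antiL : ∀ f h : Fin 3 → ℕ, deg f + deg h = N → ∀ i, 0 < h i → par f ≠ 0 →
      par f ≠ E i → P t f h := by
    intro f h hN i hi h0 hE
    obtain ⟨g, rfl⟩ := exists_split hi
    simp only [deg_add, deg_e] at hN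
    exact C.P_antiL (right _ _) (ih _ (by omega) f g rfl) (S_anti i _ h0 hE)
  have antiR : ∀ j, 0 < f j → par h ≠ 0 → par h ≠ E j → P t f h := by
    intro j hj h0 hE
    obtain ⟨g, rfl⟩ := exists_split hj
    simp only [deg_add, deg_e] at hN
    exact C.P_antiR (right _ _) (ih _ (by omega) g h rfl) (right _ _) (right _ _)
      (S_anti j _ h0 hE)
  have powL : ∀ l, (∀ j, j ≠ l → f j = 0) → P t f h := by
    intro l hl
    have hfl := eq_smul_e hl
    obtain ⟨n, hn⟩ : ∃ n, f l = n + 1 := by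
      refine Nat.exists_eq_succ_of_ne_zero fun h0 => hf0 ?_
      rw [hfl, h0, zero_smul]
    rw [hn, succ_nsmul, add_comm] at hfl
    rw [hfl, deg_add, deg_e] at hN
    rw [hfl]
    exact C.P_powL (ih _ (by omega) _ h rfl)
  have powR : ∀ l, (∀ j, j ≠ l → h j = 0) → P t f h := by
    intro l hl
    have hhl := eq_smul_e hl
    obtain ⟨n, hn⟩ : ∃ n, h l = n + 1 := by
      refine Nat.exists_eq_succ_of_ne_zero fun h0 => hh0 ?_
      rw [hhl, h0, zero_smul]
    rw [hn, succ_nsmul, add_comm] at hhl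
    rw [hhl, deg_add, deg_e] at hN
    rw [hhl]
    exact C.P_powR (ih _ (by omega) f _ rfl) (right _ _)
  by_cases hfp : par f = 0
  · by_cases hhp : par h = 0
    · obtain ⟨i, hi⟩ := exists_pos hf0
      by_cases hl : ∀ j, j ≠ i → h j = 0
      · exact powR i hl
      · push Not at hl
        obtain ⟨j, hji, hj⟩ := hl
        obtain ⟨g, rfl⟩ := exists_split hi
        rw [par_add, par_e] at hfp
        obtain ⟨hs, hg⟩ := S_comm_self i _ hfp
        simp only [deg_add, deg_e] at hN
        -- `u g` has the parity of `t i`, so it anticommutes with the generator `t j` of `h`.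
        refine C.P_comm (right _ _) (ih _ (by omega) g h rfl) (antiL g (e i + h) ?_ j ?_ ?_ ?_) hs
        · rw [deg_add, deg_e]; omega
        · simp only [Pi.add_apply]; omega
        · rw [hg]; exact E_ne_zero i
        · rw [hg]; exact fun hE => hji (E_inj hE).symm
    · obtain ⟨i, hi⟩ := exists_pos hf0
      by_cases hE : par h = E i
      · by_cases hl : ∀ j, j ≠ i → f j = 0
        · exact powL i hl
        · push Not at hl
          obtain ⟨j, hji, hj⟩ := hl
          exact antiR j (by omega) hhp fun hE' => hji (E_inj (hE'.symm.trans hE))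
      · exact antiR i hi hhp hE
  · obtain ⟨i, hi⟩ := exists_pos hh0
    by_cases hE : par f = E i
    · by_cases hl : ∀ j, j ≠ i → h j = 0
      · exact powR i hl
      · push Not at hl
        obtain ⟨j, hji, hj⟩ := hl
        exact antiL f h hN j (by omega) hfp fun hE' => hji (E_inj (hE'.symm.trans hE))
    · exact antiL f h hN i hi hfp hE

end IsCayley

/-! ### Equality up to sign -/

/-- `x = y` or `x = -y`, phrased with an integer sign. -/
def PM (x y : R) : Prop := ∃ ε : ℤ, (ε = 1 ∨ ε = -1) ∧ x = ε • y

lemma PM.refl (x : R) : PM x x := ⟨1, Or.inl rfl, by simp⟩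

lemma PM.symm {x y : R} (h : PM x y) : PM y x := by
  obtain ⟨ε, rfl | rfl, rfl⟩ := h
  · exact ⟨1, Or.inl rfl, by simp⟩
  · exact ⟨-1, Or.inr rfl, by simp⟩

lemma PM.trans {x y z : R} (h : PM x y) (k : PM y z) : PM x z := by
  obtain ⟨ε, rfl | rfl, rfl⟩ := h <;> obtain ⟨δ, rfl | rfl, rfl⟩ := k
  · exact ⟨1, Or.inl rfl, by simp⟩
  · exact ⟨-1, Or.inr rfl, by simp⟩
  · exact ⟨-1, Or.inr rfl, by simp⟩
  · exact ⟨1, Or.inl rfl, by simp⟩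

lemma PM.mul {x y x' y' : R} (h : PM x y) (k : PM x' y') : PM (x * x') (y * y') := by
  obtain ⟨ε, rfl | rfl, rfl⟩ := h <;> obtain ⟨δ, rfl | rfl, rfl⟩ := k
  · exact ⟨1, Or.inl rfl, by simp⟩
  · exact ⟨-1, Or.inr rfl, by simp⟩
  · exact ⟨-1, Or.inr rfl, by simp⟩
  · exact ⟨1, Or.inl rfl, by simp⟩

variable {t : Fin 3 → R}

lemma PM.mul_u (C : IsCayley t) {x y : R} {f h : Fin 3 → ℕ} (hx : PM x (u t f))
    (hy : PM y (u t h)) : PM (x * y) (u t (f + h)) :=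
  (hx.mul hy).trans ⟨_, S_or _ _, C.P_all _ f h rfl⟩

lemma PM.npow_u (C : IsCayley t) (i : Fin 3) (n : ℕ) {x : R} {f : Fin 3 → ℕ}
    (hx : PM x (u t f)) : PM (npowLeft (t i * t i) n * x) (u t ((2 * n) • e i + f)) := by
  have ht : PM (t i) (u t (e i)) := by rw [IsCayley.u_e]; exact PM.refl _
  induction n with
  | zero => simpa [npowLeft] using hx
  | succ n ih =>
    rw [C.npow_succ_mul]
    have h : (2 * (n + 1)) • e i + f = e i + e i + ((2 * n) • e i + f) := by
      rw [mul_add, add_smul, mul_one, two_smul]; abel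
    rw [h]
    exact (ht.mul_u C ht).mul_u C ih

lemma PM.ite_u (i : Fin 3) (n : ℕ) : PM (if Odd n then t i else 1) (u t ((n % 2) • e i)) := by
  split_ifs with h
  · rw [Nat.odd_iff.mp h, one_smul, IsCayley.u_e]; exact PM.refl _
  · rw [Nat.even_iff.mp (Nat.not_odd_iff_even.mp h), zero_smul, IsCayley.u_zero]
    exact PM.refl _

lemma PM.lift_u (C : IsCayley t) (w : FreeMagma (Fin 3)) :
    PM (FreeMagma.lift t w) (u t fun i => FreeMagma.occ i w) := by
  induction w with
  | ih1 i =>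
    have h : (fun j => FreeMagma.occ j (FreeMagma.of i)) = e i := by
      funext j; simp [FreeMagma.occ, e, Pi.single_apply, eq_comm]
    rw [h, IsCayley.u_e, FreeMagma.lift_of]
    exact PM.refl _
  | ih2 x y hx hy =>
    rw [map_mul]
    exact hx.mul_u C hy

end CayleyNF

/-- **Proposition 3.1.** In an alternative ring in which 2 is invertible,
if `t 0, t 1, t 2` satisfy the Cayley relations and `w` is a word in the free magma on
three generators with occurrence counts `ℓ, m, n`, then the evaluation of `w` at `t`
equals `± (t0²)^⌊ℓ/2⌋ * ((t1²)^⌊m/2⌋ * ((t2²)^⌊n/2⌋ * b))`, where `b` is the product,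
in order and parenthesized to the left, of those `t i` with odd occurrence count. -/
theorem cayley_monomial_normal_form (R : Type*) [NonAssocRing R] [Invertible (2 : R)]
    (alt_left : ∀ a b : R, (a * a) * b = a * (a * b))
    (alt_right : ∀ a b : R, (b * a) * a = b * (a * a))
    (t : Fin 3 → R)
    (h21 : t 1 * t 0 = -(t 0 * t 1))
    (h31 : t 2 * t 0 = -(t 0 * t 2))
    (h32 : t 2 * t 1 = -(t 1 * t 2))
    (h123 : (t 0 * t 1) * t 2 = -(t 0 * (t 1 * t 2)))
    (w : FreeMagma (Fin 3)) :
    ∃ ε : ℤ, (ε = 1 ∨ ε = -1) ∧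
      FreeMagma.lift t w =
        ε • (npowLeft (t 0 * t 0) (FreeMagma.occ 0 w / 2) *
          (npowLeft (t 1 * t 1) (FreeMagma.occ 1 w / 2) *
            (npowLeft (t 2 * t 2) (FreeMagma.occ 2 w / 2) *
              (((if Odd (FreeMagma.occ 0 w) then t 0 else 1) *
                  (if Odd (FreeMagma.occ 1 w) then t 1 else 1)) *
                (if Odd (FreeMagma.occ 2 w) then t 2 else 1))))) := by
  have cancel : ∀ x y : R, x + x = y + y → x = y := by
    have half : ∀ x : R, ⅟(2 : R) * (x + x) = x := fun x => by
      rw [mul_add, ← add_mul, ← mul_two, invOf_mul_self, one_mul]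
    intro x y h
    rw [← half x, h, half]
  have C : CayleyNF.IsCayley t := ⟨alt_left, alt_right, cancel, h21, h31, h32, h123⟩
  refine (CayleyNF.PM.lift_u C w).trans (CayleyNF.PM.symm ?_)
  have key := CayleyNF.PM.npow_u C 0 (FreeMagma.occ 0 w / 2)
    (CayleyNF.PM.npow_u C 1 (FreeMagma.occ 1 w / 2)
      (CayleyNF.PM.npow_u C 2 (FreeMagma.occ 2 w / 2)
        (((CayleyNF.PM.ite_u 0 (FreeMagma.occ 0 w)).mul_u C
          (CayleyNF.PM.ite_u 1 (FreeMagma.occ 1 w))).mul_u C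
            (CayleyNF.PM.ite_u 2 (FreeMagma.occ 2 w)))))
  convert key using 2
  funext j
  fin_cases j <;> simp [CayleyNF.e] <;> omega
end

section
/- Let Φ be a commutative ring containing 1/2 and let R be a unital alternative Φ-algebra generated as a Φ-algebra by elements t1, t2, t3 satisfying the Cayley relations. Then every element of R can be written as a sum Σ_b z_b * b, where b runs over the eight monomials 1, t1, t2, t3, t1*t2, t1*t3, t2*t3, (t1*t2)*t3 and each coefficient z_b lies in the Φ-subalgebra of R generated by {t1*t1, t2*t2, t3*t3} (a commutative associative subalgebra contained in the center of R). -/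
/-!
In an alternative ring the skew-symmetry of the associator gives, with `L_a` and `R_a` the left and
right multiplications by `a`,
`L_{ab} = L_a L_b - R_b L_a + L_a R_b` and `R_{ab} = R_b R_a + R_b L_a - L_a R_b`
(`mul_mul_expand`, `mul_mul_expand'`). So all multiplications by elements of `R` lie in the
associative algebra of operators generated by `L_t` and `R_t` for `t ∈ {1, t1, t2, t3}`, and two
things only have to be checked on the generators:

* `n = t1 * t1` is central as soon as `L_n` commutes with every `L_t` and `R_t`. If `s` and `t`
  anticommute then so do `L_s` and `L_t`, hence `L_s ^ 2 = L_{s * s}` commutes with `L_t`; since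
  `s * s` commutes with `t`, the associator `(s * s, t, y)` equals its own negative and vanishes
  because `2` is invertible (`sq_mul_comm_of_anticomm`). The same holds for `t2 * t2` and `t3 * t3`.
* The set of sums `∑ z_b * b`, with `z_b` in the central subalgebra generated by the squares, is all
  of `R` as soon as it is stable under every `L_t` and `R_t`. This is the multiplication table of
  the eight monomials by `t1, t2, t3`, which follows from `x(yz) = -y(xz)` and `(zx)y = -(zy)x` for
  anticommuting `x, y` (`left_anticomm`, `right_anticomm`).
-/

namespace CayleyPolynomials

section Alternative

variable {R : Type*} [NonAssocRing R]

/-- The linearized left alternative law. -/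
lemma left_linearized (alt_left : ∀ a b : R, (a * a) * b = a * (a * b)) (a b x : R) :
    (a * b) * x + (b * a) * x = a * (b * x) + b * (a * x) := by
  have h := alt_left (a + b) x
  simp only [add_mul, mul_add, alt_left] at h
  rw [← sub_eq_zero] at h ⊢
  rw [← h]; abel

/-- The linearized right alternative law. -/
lemma right_linearized (alt_right : ∀ a b : R, (b * a) * a = b * (a * a)) (a b x : R) :
    (x * a) * b + (x * b) * a = x * (a * b) + x * (b * a) := by
  have h := alt_right (a + b) x
  simp only [add_mul, mul_add, alt_right] at h
  rw [← sub_eq_zero] at h ⊢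
  rw [← h]; abel

/-- `L_{ab} = L_a L_b - R_b L_a + L_a R_b`, from `(a, b, x) = -(a, x, b)`. -/
lemma mul_mul_expand (alt_right : ∀ a b : R, (b * a) * a = b * (a * a)) (a b x : R) :
    (a * b) * x = a * (b * x) - (a * x) * b + a * (x * b) := by
  have h := right_linearized alt_right b x a
  rw [← sub_eq_zero] at h ⊢
  rw [← h]; abel

/-- `R_{ab} = R_b R_a + R_b L_a - L_a R_b`, from `(x, a, b) = -(a, x, b)`. -/
lemma mul_mul_expand' (alt_left : ∀ a b : R, (a * a) * b = a * (a * b)) (a b x : R) :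
    x * (a * b) = (x * a) * b + (a * x) * b - a * (x * b) := by
  have h := left_linearized alt_left x a b
  rw [h]; abel

/-- Left multiplications by anticommuting elements anticommute. -/
lemma left_anticomm (alt_left : ∀ a b : R, (a * a) * b = a * (a * b)) {s t : R}
    (h : t * s = -(s * t)) (x : R) : t * (s * x) = -(s * (t * x)) := by
  have h1 := left_linearized alt_left s t x
  rw [h, neg_mul, add_neg_cancel] at h1
  exact eq_neg_of_add_eq_zero_right h1.symm

/-- Right multiplications by anticommuting elements anticommute. -/
lemma right_anticomm (alt_right : ∀ a b : R, (b * a) * a = b * (a * a)) {s t : R}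
    (h : t * s = -(s * t)) (x : R) : (x * t) * s = -((x * s) * t) := by
  have h1 := right_linearized alt_right s t x
  rw [h, mul_neg, add_neg_cancel] at h1
  exact eq_neg_of_add_eq_zero_right h1

/-- If `s` and `t` anticommute, then `L_{s * s}` commutes with `L_t` and `R_t`. -/
lemma sq_mul_comm_of_anticomm (alt_left : ∀ a b : R, (a * a) * b = a * (a * b))
    (alt_right : ∀ a b : R, (b * a) * a = b * (a * a)) (two : ∀ x : R, x + x = 0 → x = 0)
    {s t : R} (h : t * s = -(s * t)) (x : R) :
    (s * s) * (t * x) = t * ((s * s) * x) ∧ (s * s) * (x * t) = ((s * s) * x) * t := by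
  have hL : ∀ x, (s * s) * (t * x) = t * ((s * s) * x) := fun x => by
    rw [alt_left, alt_left, left_anticomm alt_left h, left_anticomm alt_left h, mul_neg, neg_neg]
  refine ⟨hL x, ?_⟩
  have hc : (s * s) * t = t * (s * s) := by simpa using hL 1
  -- `(s * s, t, x) = (t, s * s, x)` by commutation, and these are opposite by skew-symmetry.
  have h0 : ((s * s) * t) * x = (s * s) * (t * x) := by
    have h1 := left_linearized alt_left (s * s) t x
    rw [← hc, ← hL] at h1
    rw [← sub_eq_zero]
    apply two
    rw [← sub_eq_zero] at h1
    rw [← h1]; abel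
  have h2 := mul_mul_expand alt_right (s * s) t x
  rw [h0] at h2
  rw [← sub_eq_zero] at h2 ⊢
  rw [← neg_zero, ← h2]; abel

end Alternative

section Generated

variable {Φ : Type*} [CommRing Φ] {R : Type*} [NonAssocRing R] [Module Φ R] [IsScalarTower Φ R R]

/-- In an alternative algebra generated by `G`, an element `n` is central as soon as `L_n` commutes
with left and right multiplication by the elements of `G`: by the expansions of `L_{ab}` and `R_{ab}`,
it then commutes with all multiplications. -/
lemma mem_center_of_generators [SMulCommClass Φ R R]
    (alt_left : ∀ a b : R, (a * a) * b = a * (a * b))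
    (alt_right : ∀ a b : R, (b * a) * a = b * (a * a)) {G : Set R}
    (hgen : NonUnitalAlgebra.adjoin Φ G = ⊤) {n : R}
    (hn : ∀ t ∈ G, ∀ x, n * (t * x) = t * (n * x) ∧ n * (x * t) = (n * x) * t) :
    n ∈ Set.center R := by
  have key : ∀ a x : R, n * (a * x) = a * (n * x) ∧ n * (x * a) = (n * x) * a := by
    intro a
    have ha : a ∈ NonUnitalAlgebra.adjoin Φ G := hgen ▸ NonUnitalAlgebra.mem_top
    induction ha using NonUnitalAlgebra.adjoin_induction with
    | mem t ht => exact hn t ht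
    | zero => simp
    | add a b _ _ iha ihb =>
      intro x
      simp only [add_mul, mul_add, iha x, ihb x, and_self]
    | smul r a _ iha =>
      intro x
      simp only [smul_mul_assoc, mul_smul_comm, iha x, and_self]
    | mul a b _ _ iha ihb =>
      intro x
      rw [mul_mul_expand alt_right a b x, mul_mul_expand alt_right a b (n * x),
        mul_mul_expand' alt_left a b x, mul_mul_expand' alt_left a b (n * x)]
      simp only [mul_add, mul_sub, (iha _).1, (iha _).2, (ihb _).1, (ihb _).2, and_self]
  have hc : ∀ a, n * a = a * n := fun a => by simpa using (key a 1).1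
  rw [Set.mem_center_iff]
  refine ⟨hc, fun a b => (key b a).2, fun a b => ?_⟩
  rw [← hc b, ← (key a b).1, hc]

/-- In an alternative algebra generated by `G`, a submodule which contains `1` and is stable under
left and right multiplication by the elements of `G` is everything. -/
lemma mem_of_generators [SMulCommClass Φ R R]
    (alt_left : ∀ a b : R, (a * a) * b = a * (a * b))
    (alt_right : ∀ a b : R, (b * a) * a = b * (a * a)) {G : Set R}
    (hgen : NonUnitalAlgebra.adjoin Φ G = ⊤) (M : Submodule Φ R) (h1 : (1 : R) ∈ M)
    (hM : ∀ t ∈ G, ∀ x ∈ M, t * x ∈ M ∧ x * t ∈ M) (a : R) : a ∈ M := by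
  suffices key : ∀ x ∈ M, a * x ∈ M ∧ x * a ∈ M by simpa using (key 1 h1).1
  have ha : a ∈ NonUnitalAlgebra.adjoin Φ G := hgen ▸ NonUnitalAlgebra.mem_top
  induction ha using NonUnitalAlgebra.adjoin_induction with
  | mem t ht => exact hM t ht
  | zero => simp
  | add a b _ _ iha ihb =>
    intro x hx
    rw [add_mul, mul_add]
    exact ⟨M.add_mem (iha x hx).1 (ihb x hx).1, M.add_mem (iha x hx).2 (ihb x hx).2⟩
  | smul r a _ iha =>
    intro x hx
    rw [smul_mul_assoc, mul_smul_comm]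
    exact ⟨M.smul_mem r (iha x hx).1, M.smul_mem r (iha x hx).2⟩
  | mul a b _ _ iha ihb =>
    intro x hx
    have hl := (iha _ (ihb x hx).2).1
    have hr := (ihb _ (iha x hx).1).2
    have hrb := (ihb _ (iha x hx).2).2
    have hla := (iha _ (ihb x hx).1).1
    rw [mul_mul_expand alt_right a b x, mul_mul_expand' alt_left a b x]
    exact ⟨M.add_mem (M.sub_mem hla hr) hl, M.sub_mem (M.add_mem hrb hr) hl⟩

/-- The set of combinations `∑ z_i * e_i` with coefficients `z_i` in `Z`, as a submodule. -/
def combos {k : ℕ} (Z : NonUnitalSubalgebra Φ R) (e : Fin k → R) : Submodule Φ R where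
  carrier := {x | ∃ z : Fin k → R, (∀ i, z i ∈ Z) ∧ x = ∑ i, z i * e i}
  zero_mem' := ⟨0, fun _ => Z.zero_mem, by simp⟩
  add_mem' := by
    rintro _ _ ⟨z, hz, rfl⟩ ⟨w, hw, rfl⟩
    exact ⟨z + w, fun i => Z.add_mem (hz i) (hw i), by simp [add_mul, Finset.sum_add_distrib]⟩
  smul_mem' := by
    rintro r _ ⟨z, hz, rfl⟩
    exact ⟨r • z, fun i => Z.smul_mem r (hz i), by simp [Finset.smul_sum, smul_mul_assoc]⟩

lemma mul_mem_combos {k : ℕ} {Z : NonUnitalSubalgebra Φ R} (hZ : (Z : Set R) ⊆ Set.center R)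
    {e : Fin k → R} {z x : R} (hz : z ∈ Z) (hx : x ∈ combos Z e) : z * x ∈ combos Z e := by
  obtain ⟨w, hw, rfl⟩ := hx
  refine ⟨fun i => z * w i, fun i => Z.mul_mem hz (hw i), ?_⟩
  rw [Finset.mul_sum]
  exact Finset.sum_congr rfl fun i _ => (hZ hz).left_assoc _ _

lemma basis_mem_combos {k : ℕ} {Z : NonUnitalSubalgebra Φ R} (h1 : (1 : R) ∈ Z)
    (e : Fin k → R) (i : Fin k) : e i ∈ combos Z e := by
  refine ⟨Pi.single i 1, fun j => ?_, ?_⟩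
  · by_cases h : j = i
    · subst h; simpa using h1
    · simp [h]
  · rw [Finset.sum_eq_single i] <;> simp +contextual

/-- Since the coefficients are central, stability of `combos Z e` under multiplication by `t` only
has to be checked on the `e i`. -/
lemma mul_mem_combos_of_basis {k : ℕ} {Z : NonUnitalSubalgebra Φ R}
    (hZ : (Z : Set R) ⊆ Set.center R) {e : Fin k → R} {t : R}
    (ht : ∀ i, t * e i ∈ combos Z e ∧ e i * t ∈ combos Z e) {x : R} (hx : x ∈ combos Z e) :
    t * x ∈ combos Z e ∧ x * t ∈ combos Z e := by
  obtain ⟨w, hw, rfl⟩ := hx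
  rw [Finset.mul_sum, Finset.sum_mul]
  refine ⟨Submodule.sum_mem _ fun i _ => ?_, Submodule.sum_mem _ fun i _ => ?_⟩
  · have hc := hZ (hw i)
    have h : t * (w i * e i) = w i * (t * e i) := by
      rw [hc.left_assoc, (hc.comm t).eq, ((Set.mem_center_iff.1 hc).mid_assoc)]
    rw [h]
    exact mul_mem_combos hZ (hw i) (ht i).1
  · rw [← (hZ (hw i)).left_assoc]
    exact mul_mem_combos hZ (hw i) (ht i).2

end Generated

end CayleyPolynomials

open CayleyPolynomials

/-- If `R` is a unital alternative `Φ`-algebra (`1/2 ∈ Φ`) generated by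
`t1, t2, t3` satisfying the Cayley relations, then the `Φ`-subalgebra `Z₀` generated by
the squares `t1*t1, t2*t2, t3*t3` is contained in the center of `R`, and every element
of `R` is a sum `∑ z_b * b` over the eight standard monomials
`1, t1, t2, t3, t1*t2, t1*t3, t2*t3, (t1*t2)*t3` with coefficients `z_b ∈ Z₀`. -/
theorem cayley_polynomials_spanned_by_octonion_monomials
    (Φ : Type*) [CommRing Φ] [Invertible (2 : Φ)]
    (R : Type*) [NonAssocRing R] [Module Φ R] [IsScalarTower Φ R R] [SMulCommClass Φ R R]
    (alt_left : ∀ a b : R, (a * a) * b = a * (a * b))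
    (alt_right : ∀ a b : R, (b * a) * a = b * (a * a))
    (t1 t2 t3 : R)
    (hgen : NonUnitalAlgebra.adjoin Φ ({1, t1, t2, t3} : Set R) = ⊤)
    (h21 : t2 * t1 = -(t1 * t2))
    (h31 : t3 * t1 = -(t1 * t3))
    (h32 : t3 * t2 = -(t2 * t3))
    (h123 : (t1 * t2) * t3 = -(t1 * (t2 * t3))) :
    (↑(NonUnitalAlgebra.adjoin Φ ({1, t1 * t1, t2 * t2, t3 * t3} : Set R)) : Set R)
        ⊆ Set.center R ∧
    ∀ x : R, ∃ z : Fin 8 → R,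
      (∀ i, z i ∈ NonUnitalAlgebra.adjoin Φ ({1, t1 * t1, t2 * t2, t3 * t3} : Set R)) ∧
      x = ∑ i, z i *
        ![1, t1, t2, t3, t1 * t2, t1 * t3, t2 * t3, (t1 * t2) * t3] i := by
  have two : ∀ x : R, x + x = 0 → x = 0 := fun x hx => by
    rw [← two_smul Φ x] at hx
    simpa using congrArg (fun y => (⅟2 : Φ) • y) hx
  have h12 : t1 * t2 = -(t2 * t1) := by rw [h21, neg_neg]
  have h13 : t1 * t3 = -(t3 * t1) := by rw [h31, neg_neg]
  have h23 : t2 * t3 = -(t3 * t2) := by rw [h32, neg_neg]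
  have self : ∀ s x : R, (s * s) * (s * x) = s * ((s * s) * x) ∧
      (s * s) * (x * s) = ((s * s) * x) * s := fun s x => by
    refine ⟨by simp only [alt_left], ?_⟩
    -- `s(s(xs)) = s((sx)s) = (s(sx))s` by flexibility.
    have flex : ∀ y, s * (y * s) = (s * y) * s := fun y => by
      have h := mul_mul_expand alt_right s s y
      rw [alt_left, ← sub_eq_zero] at h
      rw [← sub_eq_zero, ← neg_zero, ← h]; abel
    rw [alt_left, alt_left, flex, flex]
  have sq := @sq_mul_comm_of_anticomm R _ alt_left alt_right two
  have c1 : t1 * t1 ∈ Set.center R := by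
    refine mem_center_of_generators alt_left alt_right hgen ?_
    rintro t (rfl | rfl | rfl | rfl) x
    exacts [by simp, self _ x, sq h21 x, sq h31 x]
  have c2 : t2 * t2 ∈ Set.center R := by
    refine mem_center_of_generators alt_left alt_right hgen ?_
    rintro t (rfl | rfl | rfl | rfl) x
    exacts [by simp, sq h12 x, self _ x, sq h32 x]
  have c3 : t3 * t3 ∈ Set.center R := by
    refine mem_center_of_generators alt_left alt_right hgen ?_
    rintro t (rfl | rfl | rfl | rfl) x
    exacts [by simp, sq h13 x, sq h23 x, self _ x]
  have hZ : (↑(NonUnitalAlgebra.adjoin Φ ({1, t1 * t1, t2 * t2, t3 * t3} : Set R)) : Set R)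
      ⊆ Set.center R := by
    have h : NonUnitalAlgebra.adjoin Φ ({1, t1 * t1, t2 * t2, t3 * t3} : Set R)
        ≤ NonUnitalSubalgebra.center Φ R := by
      refine NonUnitalAlgebra.adjoin_le ?_
      rintro _ (rfl | rfl | rfl | rfl)
      exacts [Set.one_mem_center, c1, c2, c3]
    exact h
  refine ⟨hZ, ?_⟩
  set Z := NonUnitalAlgebra.adjoin Φ ({1, t1 * t1, t2 * t2, t3 * t3} : Set R)
  have z0 : (1 : R) ∈ Z := NonUnitalAlgebra.subset_adjoin Φ (by simp)
  have z1 : t1 * t1 ∈ Z := NonUnitalAlgebra.subset_adjoin Φ (by simp)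
  have z2 : t2 * t2 ∈ Z := NonUnitalAlgebra.subset_adjoin Φ (by simp)
  have z3 : t3 * t3 ∈ Z := NonUnitalAlgebra.subset_adjoin Φ (by simp)
  set e : Fin 8 → R := ![1, t1, t2, t3, t1 * t2, t1 * t3, t2 * t3, (t1 * t2) * t3]
  set M := combos Z e
  have m0 : 1 ∈ M := basis_mem_combos z0 e 0
  have m1 : t1 ∈ M := basis_mem_combos z0 e 1
  have m2 : t2 ∈ M := basis_mem_combos z0 e 2
  have m3 : t3 ∈ M := basis_mem_combos z0 e 3
  have m12 : t1 * t2 ∈ M := basis_mem_combos z0 e 4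
  have m13 : t1 * t3 ∈ M := basis_mem_combos z0 e 5
  have m23 : t2 * t3 ∈ M := basis_mem_combos z0 e 6
  have m123 : (t1 * t2) * t3 ∈ M := basis_mem_combos z0 e 7
  have sm : ∀ {z x : R}, z ∈ Z → x ∈ M → z * x ∈ M := fun hz hx => mul_mem_combos hZ hz hx
  have one : ∀ {z : R}, z ∈ Z → z ∈ M := fun hz => by simpa using sm hz m0
  have la := @left_anticomm R _ alt_left
  have ra := @right_anticomm R _ alt_right
  have comm := fun {z : R} (hz : z ∈ Set.center R) (x : R) => ((Set.mem_center_iff.1 hz).comm x).eq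
  have assoc := fun {z : R} (hz : z ∈ Set.center R) (x y : R) =>
    (Set.mem_center_iff.1 hz).left_assoc x y
  have a23 : t1 * (t2 * t3) = -((t1 * t2) * t3) := by rw [h123, neg_neg]
  have b13 : t2 * (t1 * t3) = (t1 * t2) * t3 := by rw [la h21, a23, neg_neg]
  have c12 : t3 * (t1 * t2) = -((t1 * t2) * t3) := by
    rw [la h31, h32, mul_neg, neg_neg, a23]
  -- Each product of a `t_i` with a monomial is, up to sign, a monomial or a square times a monomial.
  have r1 : ∀ i, t1 * e i ∈ M ∧ e i * t1 ∈ M := by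
    simp only [Fin.forall_fin_succ]
    refine ⟨⟨?_, ?_⟩, ⟨?_, ?_⟩, ⟨?_, ?_⟩, ⟨?_, ?_⟩, ⟨?_, ?_⟩, ⟨?_, ?_⟩, ⟨?_, ?_⟩, ⟨?_, ?_⟩,
      fun i => i.elim0⟩
    · change t1 * 1 ∈ M
      simpa using m1
    · change 1 * t1 ∈ M
      simpa using m1
    · change t1 * t1 ∈ M
      exact one z1
    · change t1 * t1 ∈ M
      exact one z1
    · change t1 * t2 ∈ M
      exact m12
    · change t2 * t1 ∈ M
      rw [h21]
      exact neg_mem m12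
    · change t1 * t3 ∈ M
      exact m13
    · change t3 * t1 ∈ M
      rw [h31]
      exact neg_mem m13
    · change t1 * (t1 * t2) ∈ M
      rw [← alt_left]
      exact sm z1 m2
    · change (t1 * t2) * t1 ∈ M
      rw [ra h21]
      exact neg_mem (sm z1 m2)
    · change t1 * (t1 * t3) ∈ M
      rw [← alt_left]
      exact sm z1 m3
    · change (t1 * t3) * t1 ∈ M
      rw [ra h31]
      exact neg_mem (sm z1 m3)
    · change t1 * (t2 * t3) ∈ M
      rw [a23]
      exact neg_mem m123
    · change (t2 * t3) * t1 ∈ M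
      rw [ra h31, h21, neg_mul, neg_neg]
      exact m123
    · change t1 * ((t1 * t2) * t3) ∈ M
      rw [h123, mul_neg, ← alt_left]
      exact neg_mem (sm z1 m23)
    · change ((t1 * t2) * t3) * t1 ∈ M
      rw [ra h31, ra h21, neg_mul, neg_neg, ← assoc c1]
      exact sm z1 m23
  have r2 : ∀ i, t2 * e i ∈ M ∧ e i * t2 ∈ M := by
    simp only [Fin.forall_fin_succ]
    refine ⟨⟨?_, ?_⟩, ⟨?_, ?_⟩, ⟨?_, ?_⟩, ⟨?_, ?_⟩, ⟨?_, ?_⟩, ⟨?_, ?_⟩, ⟨?_, ?_⟩, ⟨?_, ?_⟩,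
      fun i => i.elim0⟩
    · change t2 * 1 ∈ M
      simpa using m2
    · change 1 * t2 ∈ M
      simpa using m2
    · change t2 * t1 ∈ M
      rw [h21]
      exact neg_mem m12
    · change t1 * t2 ∈ M
      exact m12
    · change t2 * t2 ∈ M
      exact one z2
    · change t2 * t2 ∈ M
      exact one z2
    · change t2 * t3 ∈ M
      exact m23
    · change t3 * t2 ∈ M
      rw [h32]
      exact neg_mem m23
    · change t2 * (t1 * t2) ∈ M
      rw [la h21, ← comm c2]
      exact neg_mem (sm z2 m1)
    · change (t1 * t2) * t2 ∈ M
      rw [alt_right, ← comm c2]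
      exact sm z2 m1
    · change t2 * (t1 * t3) ∈ M
      rw [b13]
      exact m123
    · change (t1 * t3) * t2 ∈ M
      rw [ra h32]
      exact neg_mem m123
    · change t2 * (t2 * t3) ∈ M
      rw [← alt_left]
      exact sm z2 m3
    · change (t2 * t3) * t2 ∈ M
      rw [ra h32]
      exact neg_mem (sm z2 m3)
    · change t2 * ((t1 * t2) * t3) ∈ M
      rw [← b13, ← alt_left]
      exact sm z2 m13
    · change ((t1 * t2) * t3) * t2 ∈ M
      rw [ra h32, alt_right, ← comm c2, ← assoc c2]
      exact neg_mem (sm z2 m13)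
  have r3 : ∀ i, t3 * e i ∈ M ∧ e i * t3 ∈ M := by
    simp only [Fin.forall_fin_succ]
    refine ⟨⟨?_, ?_⟩, ⟨?_, ?_⟩, ⟨?_, ?_⟩, ⟨?_, ?_⟩, ⟨?_, ?_⟩, ⟨?_, ?_⟩, ⟨?_, ?_⟩, ⟨?_, ?_⟩,
      fun i => i.elim0⟩
    · change t3 * 1 ∈ M
      simpa using m3
    · change 1 * t3 ∈ M
      simpa using m3
    · change t3 * t1 ∈ M
      rw [h31]
      exact neg_mem m13
    · change t1 * t3 ∈ M
      exact m13
    · change t3 * t2 ∈ M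
      rw [h32]
      exact neg_mem m23
    · change t2 * t3 ∈ M
      exact m23
    · change t3 * t3 ∈ M
      exact one z3
    · change t3 * t3 ∈ M
      exact one z3
    · change t3 * (t1 * t2) ∈ M
      rw [c12]
      exact neg_mem m123
    · change (t1 * t2) * t3 ∈ M
      exact m123
    · change t3 * (t1 * t3) ∈ M
      rw [la h31, ← comm c3]
      exact neg_mem (sm z3 m1)
    · change (t1 * t3) * t3 ∈ M
      rw [alt_right, ← comm c3]
      exact sm z3 m1
    · change t3 * (t2 * t3) ∈ M
      rw [la h32, ← comm c3]
      exact neg_mem (sm z3 m2)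
    · change (t2 * t3) * t3 ∈ M
      rw [alt_right, ← comm c3]
      exact sm z3 m2
    · change t3 * ((t1 * t2) * t3) ∈ M
      rw [← neg_neg ((t1 * t2) * t3), ← c12, mul_neg, ← alt_left]
      exact neg_mem (sm z3 m12)
    · change ((t1 * t2) * t3) * t3 ∈ M
      rw [alt_right, ← comm c3]
      exact sm z3 m12
  intro x
  refine mem_of_generators alt_left alt_right hgen M m0 ?_ x
  rintro t (rfl | rfl | rfl | rfl) y hy
  exacts [by simpa using hy, mul_mem_combos_of_basis hZ r1 hy, mul_mem_combos_of_basis hZ r2 hy,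
    mul_mem_combos_of_basis hZ r3 hy]
end

section
/- Let Φ be a commutative ring containing 1/2, and let μ1, μ2 ∈ Φ be cancellable scalars. Then the associative unital Φ-algebra presented by two generators t1, t2 subject to the relations t1*t1 = μ1, t2*t2 = μ2 and t1*t2 = -(t2*t1) (the quotient of the free associative algebra FreeAlgebra Φ (Fin 2) by these relations, e.g. via RingQuot) is isomorphic as a Φ-algebra to the quaternion algebra ℍ[Φ, μ1, μ2], under the map sending t1 ↦ i and t2 ↦ j. -/
/-!
Both algebras have the same universal property: by `QuaternionAlgebra.lift`, a homomorphism out of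
`ℍ[Φ, μ1, μ2]` is a pair of elements satisfying the three defining relations. Hence the relations,
which hold for `i`, `j` (`quatRelToQuaternion`) and for the classes of `t1`, `t2` (`quatRelBasis`),
give homomorphisms in both directions. These are mutually inverse because the two composites fix
the generators.
-/

open scoped Quaternion

/-- The defining relations of the quaternion algebra `(Φ, μ1, μ2)`:
`t1² = μ1`, `t2² = μ2` and `t1*t2 = -(t2*t1)`, imposed on the free associative
algebra on two generators. -/
inductive QuatRel (Φ : Type*) [CommRing Φ] (μ1 μ2 : Φ) :
    FreeAlgebra Φ (Fin 2) → FreeAlgebra Φ (Fin 2) → Prop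
  | sq1 : QuatRel Φ μ1 μ2 (FreeAlgebra.ι Φ 0 * FreeAlgebra.ι Φ 0)
      (algebraMap Φ (FreeAlgebra Φ (Fin 2)) μ1)
  | sq2 : QuatRel Φ μ1 μ2 (FreeAlgebra.ι Φ 1 * FreeAlgebra.ι Φ 1)
      (algebraMap Φ (FreeAlgebra Φ (Fin 2)) μ2)
  | anti : QuatRel Φ μ1 μ2 (FreeAlgebra.ι Φ 0 * FreeAlgebra.ι Φ 1)
      (-(FreeAlgebra.ι Φ 1 * FreeAlgebra.ι Φ 0))

/-- The images of `t1`, `t2` and `t1 * t2` in the presented algebra satisfy the multiplication table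
of `ℍ[Φ, μ1, μ2]`. -/
def quatRelBasis (Φ : Type*) [CommRing Φ] (μ1 μ2 : Φ) :
    QuaternionAlgebra.Basis (RingQuot (QuatRel Φ μ1 μ2)) μ1 0 μ2 where
  i := RingQuot.mkAlgHom Φ (QuatRel Φ μ1 μ2) (FreeAlgebra.ι Φ 0)
  j := RingQuot.mkAlgHom Φ (QuatRel Φ μ1 μ2) (FreeAlgebra.ι Φ 1)
  k := RingQuot.mkAlgHom Φ (QuatRel Φ μ1 μ2) (FreeAlgebra.ι Φ 0 * FreeAlgebra.ι Φ 1)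
  i_mul_i := by
    rw [← map_mul, RingQuot.mkAlgHom_rel Φ QuatRel.sq1, AlgHom.commutes,
      Algebra.algebraMap_eq_smul_one, zero_smul, add_zero]
  j_mul_j := by
    rw [← map_mul, RingQuot.mkAlgHom_rel Φ QuatRel.sq2, AlgHom.commutes,
      Algebra.algebraMap_eq_smul_one]
  i_mul_j := by rw [map_mul]
  j_mul_i := by
    rw [RingQuot.mkAlgHom_rel Φ QuatRel.anti, map_neg, map_mul, zero_smul, zero_sub, neg_neg]

/-- The homomorphism `t1 ↦ i`, `t2 ↦ j` out of the presented algebra. -/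
def quatRelToQuaternion (Φ : Type*) [CommRing Φ] (μ1 μ2 : Φ) :
    RingQuot (QuatRel Φ μ1 μ2) →ₐ[Φ] ℍ[Φ, μ1, μ2] :=
  RingQuot.liftAlgHom Φ
    ⟨FreeAlgebra.lift Φ ![⟨0, 1, 0, 0⟩, ⟨0, 0, 1, 0⟩], by
      rintro _ _ (_ | _ | _) <;>
        ext <;> simp⟩

theorem quatRelToQuaternion_t1 (Φ : Type*) [CommRing Φ] (μ1 μ2 : Φ) :
    quatRelToQuaternion Φ μ1 μ2
      (RingQuot.mkAlgHom Φ (QuatRel Φ μ1 μ2) (FreeAlgebra.ι Φ 0)) = ⟨0, 1, 0, 0⟩ := by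
  simp [quatRelToQuaternion]

theorem quatRelToQuaternion_t2 (Φ : Type*) [CommRing Φ] (μ1 μ2 : Φ) :
    quatRelToQuaternion Φ μ1 μ2
      (RingQuot.mkAlgHom Φ (QuatRel Φ μ1 μ2) (FreeAlgebra.ι Φ 1)) = ⟨0, 0, 1, 0⟩ := by
  simp [quatRelToQuaternion]

/-- **Proposition 2.1.** For cancellable scalars `μ1, μ2` of a commutative
ring `Φ` containing `1/2`, the associative `Φ`-algebra presented by generators `t1, t2`
with relations `t1² = μ1`, `t2² = μ2`, `t1*t2 = -(t2*t1)` is isomorphic to the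
quaternion algebra `ℍ[Φ, μ1, μ2]`, under `t1 ↦ i`, `t2 ↦ j`. -/
theorem quaternion_algebra_presentation (Φ : Type*) [CommRing Φ] [Invertible (2 : Φ)]
    (μ1 μ2 : Φ)
    (hμ1 : ∀ x : Φ, μ1 * x = 0 → x = 0)
    (hμ2 : ∀ x : Φ, μ2 * x = 0 → x = 0) :
    ∃ e : RingQuot (QuatRel Φ μ1 μ2) ≃ₐ[Φ] ℍ[Φ, μ1, μ2],
      e (RingQuot.mkAlgHom Φ (QuatRel Φ μ1 μ2) (FreeAlgebra.ι Φ 0)) = (⟨0, 1, 0, 0⟩ : ℍ[Φ, μ1, μ2]) ∧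
      e (RingQuot.mkAlgHom Φ (QuatRel Φ μ1 μ2) (FreeAlgebra.ι Φ 1)) = (⟨0, 0, 1, 0⟩ : ℍ[Φ, μ1, μ2]) := by
  refine ⟨AlgEquiv.ofAlgHom (quatRelToQuaternion Φ μ1 μ2) (quatRelBasis Φ μ1 μ2).liftHom ?_ ?_,
    quatRelToQuaternion_t1 Φ μ1 μ2, quatRelToQuaternion_t2 Φ μ1 μ2⟩
  · apply QuaternionAlgebra.hom_ext
    · simpa [QuaternionAlgebra.Basis.lift, quatRelBasis] using quatRelToQuaternion_t1 Φ μ1 μ2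
    · simpa [QuaternionAlgebra.Basis.lift, quatRelBasis] using quatRelToQuaternion_t2 Φ μ1 μ2
  · apply RingQuot.ringQuot_ext'
    apply FreeAlgebra.hom_ext
    funext n
    fin_cases n
    · simp [quatRelToQuaternion_t1, QuaternionAlgebra.Basis.lift, quatRelBasis]
    · simp [quatRelToQuaternion_t2, QuaternionAlgebra.Basis.lift, quatRelBasis]
end

section
/- Let Φ be a commutative ring containing 1/2. The ring of Hamilton polynomials over Φ, i.e. the associative unital Φ-algebra presented by two generators t1, t2 subject to the single relation t1*t2 = -(t2*t1) (the quotient of the free associative algebra FreeAlgebra Φ (Fin 2) by this relation, e.g. via RingQuot), is isomorphic as a Φ-algebra to the quaternion algebra ℍ[Φ[X,Y], X, Y] over the polynomial ring Φ[X,Y] in two variables (MvPolynomial (Fin 2) Φ), under the map sending t1 ↦ i and t2 ↦ j. -/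
/-!
In the quotient `A` of the free algebra, `t₁ * t₁` and `t₂ * t₂` commute with both generators,
since moving either past a generator changes the sign twice or not at all; hence they are central.
Evaluating polynomials at these two central elements makes `A` an algebra over `Φ[X, Y]`, in which
`t₁, t₂, t₁ * t₂` satisfy the defining relations of `i, j, k`. The universal property of the
quaternion algebra thus gives a map `ℍ[Φ[X, Y], X, Y] → A` (`ofQuaternion`), while the presentation
of `A` gives a map the other way (`toQuaternion`). They are mutually inverse: on `A` this is checked
on generators, and on the quaternion algebra it is enough that `toQuaternion` takes the polynomial
`p` evaluated at `(t₁ * t₁, t₂ * t₂)` to the scalar `p` (`toQuaternion_scalar`), which again is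
checked on the variables.
-/

open scoped Quaternion

/-- The single defining relation `t1*t2 = -(t2*t1)` of the ring of Hamilton
polynomials, imposed on the free associative algebra on two generators. -/
inductive HamiltonRel (Φ : Type*) [CommRing Φ] :
    FreeAlgebra Φ (Fin 2) → FreeAlgebra Φ (Fin 2) → Prop
  | anti : HamiltonRel Φ (FreeAlgebra.ι Φ 0 * FreeAlgebra.ι Φ 1)
      (-(FreeAlgebra.ι Φ 1 * FreeAlgebra.ι Φ 0))

namespace Hamilton

variable (Φ : Type*) [CommRing Φ]

/-- The two generators `t₁, t₂` of the ring of Hamilton polynomials, indexed by `Fin 2`. -/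
noncomputable def gen (n : Fin 2) : RingQuot (HamiltonRel Φ) :=
  RingQuot.mkAlgHom Φ (HamiltonRel Φ) (FreeAlgebra.ι Φ n)

lemma commute_sq_of_anti {A : Type*} [Ring A] {x y : A} (h : x * y = -(y * x)) :
    Commute x (y * y) := by
  change x * (y * y) = y * y * x
  rw [← mul_assoc, h, neg_mul, mul_assoc, h, mul_neg, neg_neg, mul_assoc]

lemma gen_anti : gen Φ 0 * gen Φ 1 = -(gen Φ 1 * gen Φ 0) := by
  simpa [gen] using RingQuot.mkAlgHom_rel Φ (HamiltonRel.anti (Φ := Φ))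

lemma mem_center_of_commute {a : RingQuot (HamiltonRel Φ)} (h : ∀ n, Commute (gen Φ n) a) :
    a ∈ Subalgebra.center Φ (RingQuot (HamiltonRel Φ)) := by
  rw [Subalgebra.mem_center_iff]
  intro b
  obtain ⟨b, rfl⟩ := RingQuot.mkAlgHom_surjective Φ (HamiltonRel Φ) b
  change Commute _ _
  induction b using FreeAlgebra.induction with
  | grade0 r => simpa using Algebra.commute_algebraMap_left r a
  | grade1 n => exact h n
  | mul x y hx hy => simpa using hx.mul_left hy
  | add x y hx hy => simpa using hx.add_left hy

lemma gen_sq_mem_center (n : Fin 2) :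
    gen Φ n * gen Φ n ∈ Subalgebra.center Φ (RingQuot (HamiltonRel Φ)) := by
  have h := gen_anti Φ
  have h' : gen Φ 1 * gen Φ 0 = -(gen Φ 0 * gen Φ 1) := by rw [h, neg_neg]
  refine mem_center_of_commute Φ fun m => ?_
  have self : ∀ x : RingQuot (HamiltonRel Φ), Commute x (x * x) := fun x =>
    (Commute.refl x).mul_right (Commute.refl x)
  fin_cases n <;> fin_cases m
  · exact self _
  · exact commute_sq_of_anti h'
  · exact commute_sq_of_anti h
  · exact self _

/-- Evaluation of polynomials at the central elements `(t₁ * t₁, t₂ * t₂)`. It is defined through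
the center because `MvPolynomial.aeval` needs a commutative target. -/
noncomputable def scalar : MvPolynomial (Fin 2) Φ →ₐ[Φ] RingQuot (HamiltonRel Φ) :=
  (Subalgebra.center Φ (RingQuot (HamiltonRel Φ))).val.comp
    (MvPolynomial.aeval fun n => ⟨gen Φ n * gen Φ n, gen_sq_mem_center Φ n⟩)

lemma scalar_X (n : Fin 2) : scalar Φ (MvPolynomial.X n) = gen Φ n * gen Φ n := by
  simp [scalar]

/-- The `Φ[X, Y]`-algebra structure with `X` and `Y` acting as `t₁ * t₁` and `t₂ * t₂`. -/
noncomputable instance : Algebra (MvPolynomial (Fin 2) Φ) (RingQuot (HamiltonRel Φ)) :=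
  (scalar Φ).toRingHom.toAlgebra' fun p a =>
    (Subalgebra.mem_center_iff.mp (MvPolynomial.aeval (R := Φ)
      (fun n => (⟨gen Φ n * gen Φ n, gen_sq_mem_center Φ n⟩ :
        Subalgebra.center Φ (RingQuot (HamiltonRel Φ)))) p).2 a).symm

lemma algebraMap_eq_scalar (p : MvPolynomial (Fin 2) Φ) :
    algebraMap (MvPolynomial (Fin 2) Φ) (RingQuot (HamiltonRel Φ)) p = scalar Φ p := rfl

instance : IsScalarTower Φ (MvPolynomial (Fin 2) Φ) (RingQuot (HamiltonRel Φ)) :=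
  IsScalarTower.of_algebraMap_eq fun r => ((scalar Φ).commutes r).symm

/-- The elements `t₁, t₂, t₁ * t₂` satisfy the relations of `i, j, k`. -/
noncomputable def basis : QuaternionAlgebra.Basis (RingQuot (HamiltonRel Φ))
    (MvPolynomial.X 0 : MvPolynomial (Fin 2) Φ) 0 (MvPolynomial.X 1) where
  i := gen Φ 0
  j := gen Φ 1
  k := gen Φ 0 * gen Φ 1
  i_mul_i := by
    rw [zero_smul, add_zero, ← Algebra.algebraMap_eq_smul_one, algebraMap_eq_scalar, scalar_X]
  j_mul_j := by
    rw [← Algebra.algebraMap_eq_smul_one, algebraMap_eq_scalar, scalar_X]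
  i_mul_j := rfl
  j_mul_i := by rw [zero_smul, zero_sub, gen_anti, neg_neg]

/-- The `Φ`-algebra map from the quaternion algebra with `i ↦ t₁` and `j ↦ t₂`. -/
noncomputable def ofQuaternion :
    ℍ[MvPolynomial (Fin 2) Φ, MvPolynomial.X 0, MvPolynomial.X 1] →ₐ[Φ]
      RingQuot (HamiltonRel Φ) :=
  (basis Φ).liftHom.restrictScalars Φ

lemma ofQuaternion_apply
    (x : ℍ[MvPolynomial (Fin 2) Φ, MvPolynomial.X 0, MvPolynomial.X 1]) :
    ofQuaternion Φ x = scalar Φ x.re + scalar Φ x.imI * gen Φ 0 + scalar Φ x.imJ * gen Φ 1 +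
      scalar Φ x.imK * (gen Φ 0 * gen Φ 1) := by
  change algebraMap _ _ x.re + x.imI • gen Φ 0 + x.imJ • gen Φ 1 +
    x.imK • (gen Φ 0 * gen Φ 1) = _
  simp only [Algebra.smul_def, algebraMap_eq_scalar]

/-- The quaternion units `i, j`, indexed by `Fin 2`. -/
noncomputable def unit :
    Fin 2 → ℍ[MvPolynomial (Fin 2) Φ, MvPolynomial.X 0, MvPolynomial.X 1] :=
  ![⟨0, 1, 0, 0⟩, ⟨0, 0, 1, 0⟩]

/-- The `Φ`-algebra map to the quaternion algebra with `t₁ ↦ i` and `t₂ ↦ j`. -/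
noncomputable def toQuaternion : RingQuot (HamiltonRel Φ) →ₐ[Φ]
    ℍ[MvPolynomial (Fin 2) Φ, MvPolynomial.X 0, MvPolynomial.X 1] :=
  RingQuot.liftAlgHom Φ ⟨FreeAlgebra.lift Φ (unit Φ), by
    rintro _ _ ⟨⟩
    ext <;> simp [unit]⟩

lemma toQuaternion_gen (n : Fin 2) : toQuaternion Φ (gen Φ n) = unit Φ n := by
  simp [toQuaternion, gen]

lemma toQuaternion_scalar (p : MvPolynomial (Fin 2) Φ) :
    toQuaternion Φ (scalar Φ p) = ⟨p, 0, 0, 0⟩ := by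
  have h : (toQuaternion Φ).comp (scalar Φ) = IsScalarTower.toAlgHom Φ (MvPolynomial (Fin 2) Φ)
      ℍ[MvPolynomial (Fin 2) Φ, MvPolynomial.X 0, MvPolynomial.X 1] := by
    refine MvPolynomial.algHom_ext fun n => ?_
    rw [AlgHom.comp_apply, scalar_X, map_mul, toQuaternion_gen]
    fin_cases n <;> ext <;> simp [unit]
  exact DFunLike.congr_fun h p

lemma toQuaternion_ofQuaternion
    (x : ℍ[MvPolynomial (Fin 2) Φ, MvPolynomial.X 0, MvPolynomial.X 1]) :
    toQuaternion Φ (ofQuaternion Φ x) = x := by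
  simp only [ofQuaternion_apply, map_add, map_mul, toQuaternion_scalar, toQuaternion_gen]
  ext <;> simp [unit]

lemma ofQuaternion_unit (n : Fin 2) : ofQuaternion Φ (unit Φ n) = gen Φ n := by
  fin_cases n <;> simp [ofQuaternion_apply, unit]

lemma ofQuaternion_comp_toQuaternion :
    (ofQuaternion Φ).comp (toQuaternion Φ) = AlgHom.id Φ (RingQuot (HamiltonRel Φ)) := by
  refine RingQuot.ringQuot_ext' Φ _ _ (FreeAlgebra.hom_ext (funext fun n => ?_))
  change ofQuaternion Φ (toQuaternion Φ (gen Φ n)) = gen Φ n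
  rw [toQuaternion_gen, ofQuaternion_unit]

end Hamilton

/-- For a commutative ring `Φ` containing `1/2`, the ring of Hamilton
polynomials `Φ_H[t1, t2]` (the associative `Φ`-algebra with generators `t1, t2` and the
single relation `t1*t2 = -(t2*t1)`) is isomorphic as a `Φ`-algebra to the quaternion
algebra `ℍ[Φ[X,Y], X, Y]` over the polynomial ring in two variables, via `t1 ↦ i`,
`t2 ↦ j`. -/
theorem hamilton_polynomials_iso_quaternion (Φ : Type*) [CommRing Φ] [Invertible (2 : Φ)] :
    ∃ e : RingQuot (HamiltonRel Φ) ≃ₐ[Φ]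
        ℍ[MvPolynomial (Fin 2) Φ, MvPolynomial.X 0, MvPolynomial.X 1],
      e (RingQuot.mkAlgHom Φ (HamiltonRel Φ) (FreeAlgebra.ι Φ 0)) =
        (⟨0, 1, 0, 0⟩ : ℍ[MvPolynomial (Fin 2) Φ, MvPolynomial.X 0, MvPolynomial.X 1]) ∧
      e (RingQuot.mkAlgHom Φ (HamiltonRel Φ) (FreeAlgebra.ι Φ 1)) =
        (⟨0, 0, 1, 0⟩ : ℍ[MvPolynomial (Fin 2) Φ, MvPolynomial.X 0, MvPolynomial.X 1]) := by
  exact ⟨AlgEquiv.ofAlgHom (Hamilton.toQuaternion Φ) (Hamilton.ofQuaternion Φ)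
    (AlgHom.ext (Hamilton.toQuaternion_ofQuaternion Φ)) (Hamilton.ofQuaternion_comp_toQuaternion Φ),
    Hamilton.toQuaternion_gen Φ 0, Hamilton.toQuaternion_gen Φ 1⟩
end

section
/- Let Φ be a commutative ring containing 1/2. Let L = AddMonoidAlgebra Φ (ℤ × ℤ) be the ring of Laurent polynomials in two variables over Φ, with z1, z2 ∈ L the monomials corresponding to (1,0) and (0,1). Then the associative unital Φ-algebra presented by four generators t1, s1, t2, s2 subject to the relations t1*s1 = 1, s1*t1 = 1, t2*s2 = 1, s2*t2 = 1 and t1*t2 = -(t2*t1) (a quotient of the free associative algebra on four generators) is isomorphic as a Φ-algebra to the quaternion algebra ℍ[L, z1, z2], under the map sending t1 ↦ i and t2 ↦ j. This algebra is the Hamilton torus Φ_H[t1^{±1}, t2^{±1}]. -/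
/-!
The presented algebra `A` maps onto the quaternion algebra `H` over `L = Φ[z1^{±1}, z2^{±1}]` by
`t1 ↦ i`, `s1 ↦ z1⁻¹ i`, `t2 ↦ j`, `s2 ↦ z2⁻¹ j`, since the defining relations hold in `H`.

For the inverse, `t1²` and `t2²` commute with all four generators of `A`, so they are invertible
elements of its centre, and `z1 ↦ t1²`, `z2 ↦ t2²` makes `A` an algebra over `L`. Then
`(t1, t2, t1 t2)` is a quaternion basis of `A` over `L`, and the universal property of `H` gives a
homomorphism `H → A` with `i ↦ t1` and `j ↦ t2` (`HamiltonTorus.exists_hom`).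

Both composites are identities because a `Φ`-algebra homomorphism out of `A` or out of `H` is
determined by its values on `t1, t2`, respectively on `i, j`: in `A` the elements `s1, s2` are the
inverses of `t1, t2`, and in `H` one has `z1 = i²`, `z2 = j²` (`HamiltonTorus.quaternion_hom_ext`).
-/

open scoped Quaternion

/-- The defining relations of the Hamilton torus: generators `t1, s1, t2, s2`
(indexed `0, 1, 2, 3`) with `t1*s1 = s1*t1 = t2*s2 = s2*t2 = 1` and
`t1*t2 = -(t2*t1)`, imposed on the free associative algebra on four generators. -/
inductive HamiltonTorusRel (Φ : Type*) [CommRing Φ] :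
    FreeAlgebra Φ (Fin 4) → FreeAlgebra Φ (Fin 4) → Prop
  | inv1 : HamiltonTorusRel Φ (FreeAlgebra.ι Φ 0 * FreeAlgebra.ι Φ 1) 1
  | inv1' : HamiltonTorusRel Φ (FreeAlgebra.ι Φ 1 * FreeAlgebra.ι Φ 0) 1
  | inv2 : HamiltonTorusRel Φ (FreeAlgebra.ι Φ 2 * FreeAlgebra.ι Φ 3) 1
  | inv2' : HamiltonTorusRel Φ (FreeAlgebra.ι Φ 3 * FreeAlgebra.ι Φ 2) 1
  | anti : HamiltonTorusRel Φ (FreeAlgebra.ι Φ 0 * FreeAlgebra.ι Φ 2)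
      (-(FreeAlgebra.ι Φ 2 * FreeAlgebra.ι Φ 0))

namespace HamiltonTorus

/-- The quaternion algebra `ℍ[L, z1, z2]` over the Laurent polynomial ring `L` in `z1, z2`. -/
abbrev Quat (Φ : Type*) [CommRing Φ] :=
  ℍ[AddMonoidAlgebra Φ (ℤ × ℤ), AddMonoidAlgebra.single (1, 0) 1, AddMonoidAlgebra.single (0, 1) 1]

/-- Homomorphisms out of the Laurent polynomial ring are determined by the images of `z1, z2`;
the images of the inverse monomials are then forced. -/
lemma laurent_hom_ext {Φ B : Type*} [CommRing Φ] [Ring B] [Algebra Φ B]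
    {F G : AddMonoidAlgebra Φ (ℤ × ℤ) →ₐ[Φ] B}
    (h1 : F (AddMonoidAlgebra.single (1, 0) 1) = G (AddMonoidAlgebra.single (1, 0) 1))
    (h2 : F (AddMonoidAlgebra.single (0, 1) 1) = G (AddMonoidAlgebra.single (0, 1) 1)) :
    F = G := by
  let f : Multiplicative (ℤ × ℤ) →* B :=
    (F : AddMonoidAlgebra Φ (ℤ × ℤ) →* B).comp (AddMonoidAlgebra.of Φ (ℤ × ℤ))
  let g : Multiplicative (ℤ × ℤ) →* B :=
    (G : AddMonoidAlgebra Φ (ℤ × ℤ) →* B).comp (AddMonoidAlgebra.of Φ (ℤ × ℤ))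
  have hl : f.comp (AddMonoidHom.toMultiplicative (AddMonoidHom.inl ℤ ℤ)) =
      g.comp (AddMonoidHom.toMultiplicative (AddMonoidHom.inl ℤ ℤ)) :=
    MonoidHom.ext_mint h1
  have hr : f.comp (AddMonoidHom.toMultiplicative (AddMonoidHom.inr ℤ ℤ)) =
      g.comp (AddMonoidHom.toMultiplicative (AddMonoidHom.inr ℤ ℤ)) :=
    MonoidHom.ext_mint h2
  refine AddMonoidAlgebra.algHom_ext (fun p => ?_) (Subsingleton.elim _ _)
  have hp : Multiplicative.ofAdd p =
      Multiplicative.ofAdd (p.1, (0 : ℤ)) * Multiplicative.ofAdd ((0 : ℤ), p.2) := by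
    rw [← ofAdd_add]; simp
  have hf : f (Multiplicative.ofAdd p) = g (Multiplicative.ofAdd p) := by
    rw [hp, map_mul, map_mul]
    exact congrArg₂ (· * ·) (DFunLike.congr_fun hl (Multiplicative.ofAdd p.1))
      (DFunLike.congr_fun hr (Multiplicative.ofAdd p.2))
  exact hf

/-- `Φ`-linear (not merely `L`-linear) homomorphisms out of the quaternion algebra are determined
by the images of `i` and `j`, since `z1 = i²` and `z2 = j²`. -/
lemma quaternion_hom_ext {Φ B : Type*} [CommRing Φ] [Ring B] [Algebra Φ B]
    {F G : Quat Φ →ₐ[Φ] B}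
    (hi : F ⟨0, 1, 0, 0⟩ = G ⟨0, 1, 0, 0⟩) (hj : F ⟨0, 0, 1, 0⟩ = G ⟨0, 0, 1, 0⟩) :
    F = G := by
  let ι : AddMonoidAlgebra Φ (ℤ × ℤ) →ₐ[Φ] Quat Φ :=
    IsScalarTower.toAlgHom Φ (AddMonoidAlgebra Φ (ℤ × ℤ)) (Quat Φ)
  have hι : ∀ r, ι r = ⟨r, 0, 0, 0⟩ := fun r => rfl
  have h1 : ι (AddMonoidAlgebra.single (1, 0) 1) = (⟨0, 1, 0, 0⟩ : Quat Φ) * ⟨0, 1, 0, 0⟩ := by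
    rw [hι]; ext1 <;> simp
  have h2 : ι (AddMonoidAlgebra.single (0, 1) 1) = (⟨0, 0, 1, 0⟩ : Quat Φ) * ⟨0, 0, 1, 0⟩ := by
    rw [hι]; ext1 <;> simp
  have hL : F.comp ι = G.comp ι := by
    apply laurent_hom_ext
    · simp only [AlgHom.comp_apply, h1, map_mul]; rw [hi]
    · simp only [AlgHom.comp_apply, h2, map_mul]; rw [hj]
  have hL' : ∀ r, F (ι r) = G (ι r) := fun r => DFunLike.congr_fun hL r
  ext x
  have hx : x = ι x.re + ι x.imI * (⟨0, 1, 0, 0⟩ : Quat Φ) + ι x.imJ * (⟨0, 0, 1, 0⟩ : Quat Φ)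
      + ι x.imK * ((⟨0, 1, 0, 0⟩ : Quat Φ) * (⟨0, 0, 1, 0⟩ : Quat Φ)) := by
    simp only [hι]; ext1 <;> simp
  rw [hx]
  simp only [map_add, map_mul, hL']
  rw [hi, hj]

/-- Universal property of the quaternion algebra over the Laurent polynomials: anticommuting
units with central squares induce a homomorphism. -/
lemma exists_hom {Φ A : Type*} [CommRing Φ] [Ring A] [Algebra Φ A] (t₁ t₂ : Aˣ)
    (anti : (t₁ : A) * t₂ = -(t₂ * t₁))
    (c₁ : ∀ a : A, Commute (t₁ * t₁ : A) a) (c₂ : ∀ a : A, Commute (t₂ * t₂ : A) a) :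
    ∃ g : Quat Φ →ₐ[Φ] A,
      g ⟨0, 1, 0, 0⟩ = t₁ ∧ g ⟨0, 0, 1, 0⟩ = t₂ := by
  have mk : ∀ t : Aˣ, (∀ a : A, Commute (t * t : A) a) →
      ∃ u : (Subalgebra.center Φ A)ˣ, ((u : Subalgebra.center Φ A) : A) = t * t := by
    intro t ht
    have ht' : ∀ a : A, Commute (((t * t)⁻¹ : Aˣ) : A) a := fun a =>
      Commute.units_inv_left (by simpa using ht a)
    refine ⟨⟨⟨t * t, Subalgebra.mem_center_iff.2 fun a => (ht a).eq.symm⟩,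
      ⟨((t * t)⁻¹ : Aˣ), Subalgebra.mem_center_iff.2 fun a => (ht' a).eq.symm⟩, ?_, ?_⟩, rfl⟩
    · exact Subtype.ext (by simpa using (t * t).mul_inv)
    · exact Subtype.ext (by simpa using (t * t).inv_mul)
  obtain ⟨u₁, hu₁⟩ := mk t₁ c₁
  obtain ⟨u₂, hu₂⟩ := mk t₂ c₂
  let w : Multiplicative (ℤ × ℤ) →* Subalgebra.center Φ A :=
    (Units.coeHom _).comp
      { toFun := fun m => u₁ ^ m.toAdd.1 * u₂ ^ m.toAdd.2
        map_one' := by simp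
        map_mul' := fun a b => by
          simp only [toAdd_mul, Prod.fst_add, Prod.snd_add, zpow_add]
          exact mul_mul_mul_comm _ _ _ _ }
  let φ : AddMonoidAlgebra Φ (ℤ × ℤ) →ₐ[Φ] Subalgebra.center Φ A :=
    AddMonoidAlgebra.lift Φ _ _ w
  have hφ₁ : ((φ (AddMonoidAlgebra.single (1, 0) 1) : Subalgebra.center Φ A) : A) = t₁ * t₁ := by
    simp [φ, w, hu₁]
  have hφ₂ : ((φ (AddMonoidAlgebra.single (0, 1) 1) : Subalgebra.center Φ A) : A) = t₂ * t₂ := by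
    simp [φ, w, hu₂]
  -- `L` acts on `A` through `φ`; a ring map into the centre is what an algebra structure needs.
  let : Algebra (AddMonoidAlgebra Φ (ℤ × ℤ)) A :=
    (((Subalgebra.center Φ A).val.comp φ : AddMonoidAlgebra Φ (ℤ × ℤ) →ₐ[Φ] A) :
      AddMonoidAlgebra Φ (ℤ × ℤ) →+* A).toAlgebra' fun r a =>
        (Subalgebra.mem_center_iff.1 (φ r).2 a).symm
  have hsmul : ∀ (r : AddMonoidAlgebra Φ (ℤ × ℤ)) (a : A), r • a = (φ r : A) * a :=
    fun r a => rfl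
  have : IsScalarTower Φ (AddMonoidAlgebra Φ (ℤ × ℤ)) A := ⟨fun r x a => by
    simp [hsmul]⟩
  let q : QuaternionAlgebra.Basis A (AddMonoidAlgebra.single ((1 : ℤ), (0 : ℤ)) (1 : Φ)) 0
      (AddMonoidAlgebra.single ((0 : ℤ), (1 : ℤ)) (1 : Φ)) :=
    { i := t₁
      j := t₂
      k := t₁ * t₂
      i_mul_i := by rw [hsmul, hφ₁]; simp
      j_mul_j := by rw [hsmul, hφ₂]; simp
      i_mul_j := rfl
      j_mul_i := by rw [anti]; simp }
  refine ⟨q.liftHom.restrictScalars Φ, ?_, ?_⟩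
  · change q.lift _ = _
    simp [QuaternionAlgebra.Basis.lift, q]
  · change q.lift _ = _
    simp [QuaternionAlgebra.Basis.lift, q]

/-- Homomorphisms out of the presented algebra are determined by the images of `t1` and `t2`,
whose inverses are `s1` and `s2`. -/
lemma ringQuot_hom_ext {Φ B : Type*} [CommRing Φ] [Ring B] [Algebra Φ B]
    {F G : RingQuot (HamiltonTorusRel Φ) →ₐ[Φ] B}
    (h1 : F (RingQuot.mkAlgHom Φ _ (FreeAlgebra.ι Φ 0)) =
      G (RingQuot.mkAlgHom Φ _ (FreeAlgebra.ι Φ 0)))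
    (h2 : F (RingQuot.mkAlgHom Φ _ (FreeAlgebra.ι Φ 2)) =
      G (RingQuot.mkAlgHom Φ _ (FreeAlgebra.ι Φ 2))) :
    F = G := by
  have r1 := RingQuot.mkAlgHom_rel Φ (HamiltonTorusRel.inv1 (Φ := Φ))
  have r1' := RingQuot.mkAlgHom_rel Φ (HamiltonTorusRel.inv1' (Φ := Φ))
  have r2 := RingQuot.mkAlgHom_rel Φ (HamiltonTorusRel.inv2 (Φ := Φ))
  have r2' := RingQuot.mkAlgHom_rel Φ (HamiltonTorusRel.inv2' (Φ := Φ))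
  rw [map_mul, map_one] at r1 r1' r2 r2'
  have a1 := congrArg F r1'
  have b1 := congrArg G r1
  have a2 := congrArg F r2'
  have b2 := congrArg G r2
  rw [map_mul, map_one] at a1 b1 a2 b2
  refine RingQuot.ringQuot_ext' _ _ _ (FreeAlgebra.hom_ext (funext fun n => ?_))
  fin_cases n
  · exact h1
  · exact left_inv_eq_right_inv a1 (by rw [h1]; exact b1)
  · exact h2
  · exact left_inv_eq_right_inv a2 (by rw [h2]; exact b2)

/-- An element commuting with the four generators is central in the presented algebra. -/
lemma commute_of_generators {Φ : Type*} [CommRing Φ] {x : RingQuot (HamiltonTorusRel Φ)}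
    (h : ∀ n, Commute x (RingQuot.mkAlgHom Φ _ (FreeAlgebra.ι Φ n)))
    (a : RingQuot (HamiltonTorusRel Φ)) : Commute x a := by
  obtain ⟨b, rfl⟩ := RingQuot.mkAlgHom_surjective Φ (HamiltonTorusRel Φ) a
  induction b using FreeAlgebra.induction with
  | grade0 r => rw [AlgHom.commutes]; exact (Algebra.commutes r x).symm
  | grade1 n => exact h n
  | mul a b ha hb => rw [map_mul]; exact ha.mul_right hb
  | add a b ha hb => rw [map_add]; exact ha.add_right hb

/-- The square of `t` commutes with anything that anticommutes with `t`. -/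
lemma commute_sq_of_anti {A : Type*} [Ring A] {t s : A} (h : t * s = -(s * t)) :
    Commute (t * t) s := by
  change t * t * s = s * (t * t)
  rw [mul_assoc, h, mul_neg, ← mul_assoc, h, neg_mul, neg_neg, mul_assoc]

/-- The homomorphism from the presented algebra to the quaternion algebra. -/
lemma exists_toQuaternion (Φ : Type*) [CommRing Φ] :
    ∃ f : RingQuot (HamiltonTorusRel Φ) →ₐ[Φ] Quat Φ,
      f (RingQuot.mkAlgHom Φ _ (FreeAlgebra.ι Φ 0)) = ⟨0, 1, 0, 0⟩ ∧
      f (RingQuot.mkAlgHom Φ _ (FreeAlgebra.ι Φ 2)) = ⟨0, 0, 1, 0⟩ := by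
  -- The inverses of `i` and `j` are `z1⁻¹ i` and `z2⁻¹ j`.
  let v : Fin 4 → Quat Φ := ![⟨0, 1, 0, 0⟩, ⟨0, AddMonoidAlgebra.single (-1, 0) 1, 0, 0⟩,
    ⟨0, 0, 1, 0⟩, ⟨0, 0, AddMonoidAlgebra.single (0, -1) 1, 0⟩]
  have hv : ∀ ⦃x y⦄, HamiltonTorusRel Φ x y →
      FreeAlgebra.lift Φ v x = FreeAlgebra.lift Φ v y := by
    intro x y h
    cases h <;> simp only [map_mul, map_one, map_neg, FreeAlgebra.lift_ι_apply] <;>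
      ext1 <;> simp [v, AddMonoidAlgebra.single_mul_single,
        AddMonoidAlgebra.one_def] <;> rfl
  refine ⟨RingQuot.liftAlgHom Φ ⟨FreeAlgebra.lift Φ v, hv⟩, ?_, ?_⟩
  · rw [RingQuot.liftAlgHom_mkAlgHom_apply, FreeAlgebra.lift_ι_apply]; rfl
  · rw [RingQuot.liftAlgHom_mkAlgHom_apply, FreeAlgebra.lift_ι_apply]; rfl

/-- The homomorphism from the quaternion algebra to the presented algebra. -/
lemma exists_ofQuaternion (Φ : Type*) [CommRing Φ] :
    ∃ g : Quat Φ →ₐ[Φ] RingQuot (HamiltonTorusRel Φ),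
      g ⟨0, 1, 0, 0⟩ = RingQuot.mkAlgHom Φ _ (FreeAlgebra.ι Φ 0) ∧
      g ⟨0, 0, 1, 0⟩ = RingQuot.mkAlgHom Φ _ (FreeAlgebra.ι Φ 2) := by
  have r1 := RingQuot.mkAlgHom_rel Φ (HamiltonTorusRel.inv1 (Φ := Φ))
  have r1' := RingQuot.mkAlgHom_rel Φ (HamiltonTorusRel.inv1' (Φ := Φ))
  have r2 := RingQuot.mkAlgHom_rel Φ (HamiltonTorusRel.inv2 (Φ := Φ))
  have r2' := RingQuot.mkAlgHom_rel Φ (HamiltonTorusRel.inv2' (Φ := Φ))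
  have r3 := RingQuot.mkAlgHom_rel Φ (HamiltonTorusRel.anti (Φ := Φ))
  rw [map_mul, map_one] at r1 r1' r2 r2'
  rw [map_neg, map_mul, map_mul] at r3
  let t₁ : (RingQuot (HamiltonTorusRel Φ))ˣ := ⟨_, _, r1, r1'⟩
  let t₂ : (RingQuot (HamiltonTorusRel Φ))ˣ := ⟨_, _, r2, r2'⟩
  have anti : (t₁ : RingQuot (HamiltonTorusRel Φ)) * t₂ = -(t₂ * t₁) := r3
  have anti' : (t₂ : RingQuot (HamiltonTorusRel Φ)) * t₁ = -(t₁ * t₂) := by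
    rw [anti, neg_neg]
  have self : ∀ t : (RingQuot (HamiltonTorusRel Φ))ˣ,
      Commute (t * t : RingQuot (HamiltonTorusRel Φ)) t := fun t =>
    (Commute.refl _).mul_left (Commute.refl _)
  refine exists_hom t₁ t₂ anti (commute_of_generators fun n => ?_)
    (commute_of_generators fun n => ?_)
  · fin_cases n
    · exact self t₁
    · exact (self t₁).units_inv_right
    · exact commute_sq_of_anti anti
    · exact (commute_sq_of_anti anti).units_inv_right
  · fin_cases n
    · exact commute_sq_of_anti anti'
    · exact (commute_sq_of_anti anti').units_inv_right
    · exact self t₂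
    · exact (self t₂).units_inv_right

end HamiltonTorus

/-- For a commutative ring `Φ` containing `1/2`, the associative
`Φ`-algebra presented by generators `t1, s1, t2, s2` with relations
`t1*s1 = s1*t1 = t2*s2 = s2*t2 = 1` and `t1*t2 = -(t2*t1)` is isomorphic as a
`Φ`-algebra to the quaternion algebra `ℍ[L, z1, z2]` over the Laurent polynomial ring
`L = Φ[z1^{±1}, z2^{±1}]` (the group algebra of `ℤ²`), via `t1 ↦ i`, `t2 ↦ j`.
This is the Hamilton torus `Φ_H[t1^{±1}, t2^{±1}]`. -/
theorem hamilton_torus_presentation (Φ : Type*) [CommRing Φ] [Invertible (2 : Φ)] :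
    ∃ e : RingQuot (HamiltonTorusRel Φ) ≃ₐ[Φ]
        ℍ[AddMonoidAlgebra Φ (ℤ × ℤ),
          AddMonoidAlgebra.single (1, 0) 1, AddMonoidAlgebra.single (0, 1) 1],
      e (RingQuot.mkAlgHom Φ (HamiltonTorusRel Φ) (FreeAlgebra.ι Φ 0)) =
        (⟨0, 1, 0, 0⟩ : ℍ[AddMonoidAlgebra Φ (ℤ × ℤ),
          AddMonoidAlgebra.single (1, 0) 1, AddMonoidAlgebra.single (0, 1) 1]) ∧
      e (RingQuot.mkAlgHom Φ (HamiltonTorusRel Φ) (FreeAlgebra.ι Φ 2)) =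
        (⟨0, 0, 1, 0⟩ : ℍ[AddMonoidAlgebra Φ (ℤ × ℤ),
          AddMonoidAlgebra.single (1, 0) 1, AddMonoidAlgebra.single (0, 1) 1]) := by
  obtain ⟨f, f1, f2⟩ := HamiltonTorus.exists_toQuaternion Φ
  obtain ⟨g, g1, g2⟩ := HamiltonTorus.exists_ofQuaternion Φ
  refine ⟨AlgEquiv.ofAlgHom f g (HamiltonTorus.quaternion_hom_ext ?_ ?_)
    (HamiltonTorus.ringQuot_hom_ext ?_ ?_), f1, f2⟩
  · simp only [AlgHom.comp_apply, AlgHom.id_apply, g1, f1]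
  · simp only [AlgHom.comp_apply, AlgHom.id_apply, g2, f2]
  · simp only [AlgHom.comp_apply, AlgHom.id_apply, f1, g1]
  · simp only [AlgHom.comp_apply, AlgHom.id_apply, f2, g2]
end

section
/- Let Φ be a commutative ring containing 1/2, and let A be an associative unital Φ-algebra generated as a Φ-algebra by two invertible elements a1, a2 satisfying a1*a2 = -(a2*a1). Then there is a surjective Φ-algebra homomorphism from the Hamilton torus ℍ[AddMonoidAlgebra Φ (ℤ × ℤ), z1, z2] onto A sending i ↦ a1 and j ↦ a2, where z1, z2 are the monomials corresponding to (1,0) and (0,1). -/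
open scoped Quaternion

/-!
Since `a1` and `a2` anticommute, `a1 ^ 2` and `a2 ^ 2` commute with both generators, hence are
central units of `A`. Therefore `(m, n) ↦ a1 ^ (2 m) a2 ^ (2 n)` is a homomorphism from `ℤ × ℤ` to
the units of `A`, and it extends to a `Φ`-algebra homomorphism from the Laurent polynomial ring
to the centre of `A`. This makes `A` an algebra over the Laurent polynomial ring in which
`a1 * a1 = z1` and `a2 * a2 = z2`, so `a1, a2, a1 * a2` is a quaternion basis in `A`, and the
universal property of quaternion algebras gives the homomorphism. Its range contains the
generators, so it is surjective.
-/

/-- The homomorphism `(m, n) ↦ v ^ m * w ^ n` attached to two commuting units. -/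
def zpowPairHom {A : Type*} [Ring A] (v w : Aˣ) (h : Commute v w) :
    Multiplicative (ℤ × ℤ) →* A where
  toFun p := ((v ^ p.toAdd.1 * w ^ p.toAdd.2 : Aˣ) : A)
  map_one' := by simp
  map_mul' p q := by
    rw [← Units.val_mul]
    congr 1
    simp only [toAdd_mul, Prod.fst_add, Prod.snd_add, zpow_add]
    exact ((h.zpow_zpow _ _).symm.mul_mul_mul_comm _ _).symm

theorem commute_of_commute_generators {Φ A : Type*} [CommRing Φ] [Ring A] [Algebra Φ A]
    {s : Set A} (hs : Algebra.adjoin Φ s = ⊤) {c : A} (hc : ∀ x ∈ s, Commute c x) (x : A) :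
    Commute c x := by
  have hx : x ∈ Algebra.adjoin Φ s := hs ▸ Algebra.mem_top
  induction hx using Algebra.adjoin_induction with
  | mem x hx => exact hc x hx
  | algebraMap r => exact (Algebra.commutes r c).symm
  | add x y _ _ hx hy => exact hx.add_right hy
  | mul x y _ _ hx hy => exact hx.mul_right hy

theorem commute_mul_self_of_anticomm {A : Type*} [Ring A] {a b : A} (h : a * b = -(b * a)) :
    Commute (a * a) b := by
  change a * a * b = b * (a * a)
  rw [mul_assoc, h, mul_neg, ← mul_assoc, h, neg_mul, neg_neg, mul_assoc]

/-- Let `Φ` be a commutative ring containing `1/2` and `A` an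
associative unital `Φ`-algebra generated by two invertible elements `a1, a2` with
`a1*a2 = -(a2*a1)`.  Then there is a surjective `Φ`-algebra homomorphism from the
Hamilton torus `ℍ[Φ[z1^{±1}, z2^{±1}], z1, z2]` onto `A` with `i ↦ a1`, `j ↦ a2`. -/
theorem hamilton_torus_universal (Φ : Type*) [CommRing Φ] [Invertible (2 : Φ)]
    (A : Type*) [Ring A] [Algebra Φ A]
    (a1 a2 : A) (hu1 : IsUnit a1) (hu2 : IsUnit a2)
    (hgen : Algebra.adjoin Φ ({a1, a2} : Set A) = ⊤)
    (hanti : a1 * a2 = -(a2 * a1)) :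
    ∃ f : ℍ[AddMonoidAlgebra Φ (ℤ × ℤ),
        AddMonoidAlgebra.single (1, 0) 1, AddMonoidAlgebra.single (0, 1) 1] →ₐ[Φ] A,
      Function.Surjective f ∧
      f ⟨0, 1, 0, 0⟩ = a1 ∧ f ⟨0, 0, 1, 0⟩ = a2 := by
  obtain ⟨u, rfl⟩ := hu1
  obtain ⟨w, rfl⟩ := hu2
  have hanti' : (w : A) * u = -(u * w) := by rw [hanti, neg_neg]
  have hcu : ∀ x : A, Commute ((u * u : Aˣ) : A) x := by
    refine commute_of_commute_generators hgen ?_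
    rintro x (rfl | rfl)
    · exact (Commute.refl _).mul_left (Commute.refl _)
    · exact commute_mul_self_of_anticomm hanti
  have hcw : ∀ x : A, Commute ((w * w : Aˣ) : A) x := by
    refine commute_of_commute_generators hgen ?_
    rintro x (rfl | rfl)
    · exact commute_mul_self_of_anticomm hanti'
    · exact (Commute.refl _).mul_left (Commute.refl _)
  have hcomm : Commute (u * u) (w * w) := Units.ext (hcu _)
  let g : AddMonoidAlgebra Φ (ℤ × ℤ) →ₐ[Φ] A :=
    AddMonoidAlgebra.lift Φ A (ℤ × ℤ) (zpowPairHom (u * u) (w * w) hcomm)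
  have hg : ∀ p r, g (AddMonoidAlgebra.single p r) =
      r • (((u * u) ^ p.1 * (w * w) ^ p.2 : Aˣ) : A) := fun p r =>
    AddMonoidAlgebra.lift_single _ _ _
  have hgc : ∀ l x, g l * x = x * g l := by
    intro l x
    induction l using AddMonoidAlgebra.induction_linear with
    | zero => simp
    | add l m hl hm => rw [map_add, add_mul, mul_add, hl, hm]
    | single p r =>
      rw [hg, Units.val_mul]
      exact Commute.smul_left
        (((hcu x).units_zpow_left p.1).mul_left ((hcw x).units_zpow_left p.2)) r
  letI : Algebra (AddMonoidAlgebra Φ (ℤ × ℤ)) A := g.toRingHom.toAlgebra' hgc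
  haveI : IsScalarTower Φ (AddMonoidAlgebra Φ (ℤ × ℤ)) A :=
    IsScalarTower.of_algebraMap_eq fun r => (g.commutes r).symm
  have hsmul : ∀ (l : AddMonoidAlgebra Φ (ℤ × ℤ)) (x : A), l • x = g l * x := fun _ _ => rfl
  let q : QuaternionAlgebra.Basis A
      (AddMonoidAlgebra.single (1, 0) 1 : AddMonoidAlgebra Φ (ℤ × ℤ)) 0
      (AddMonoidAlgebra.single (0, 1) 1) :=
    { i := u
      j := w
      k := u * w
      i_mul_i := by simp [hsmul, hg]
      j_mul_j := by simp [hsmul, hg]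
      i_mul_j := rfl
      j_mul_i := by rw [hanti', zero_smul, zero_sub] }
  have hi : q.liftHom ⟨0, 1, 0, 0⟩ = u := by
    simp [QuaternionAlgebra.Basis.lift, q]
  have hj : q.liftHom ⟨0, 0, 1, 0⟩ = w := by
    simp [QuaternionAlgebra.Basis.lift, q]
  refine ⟨q.liftHom.restrictScalars Φ, ?_, hi, hj⟩
  rw [← AlgHom.range_eq_top, eq_top_iff, ← hgen, Algebra.adjoin_le_iff]
  rintro x (rfl | rfl)
  exacts [⟨_, hi⟩, ⟨_, hj⟩]
end

section
/- Let F be a field of characteristic ≠ 2 and let μ1, μ2, μ3 ∈ F be nonzero. Suppose A and A' are nonzero unital alternative F-algebras such that A is generated as an F-algebra by elements a1, a2, a3 satisfying the Cayley relations and a1*a1 = μ1·1, a2*a2 = μ2·1, a3*a3 = μ3·1, and A' is generated as an F-algebra by elements a1', a2', a3' satisfying the Cayley relations and a1'*a1' = μ1·1, a2'*a2' = μ2·1, a3'*a3' = μ3·1. Then A and A' are isomorphic as F-algebras (by an isomorphism carrying ai to ai'). -/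
/-!
Write `e₁ = a₁`, `e₂ = a₂`, `e₃ = a₁a₂`, `e₄ = a₃`, `e₅ = a₁a₃`, `e₆ = a₂a₃`, `e₇ = (a₁a₂)a₃`.
In an alternative ring, linearizing the alternative laws gives `u(vz) = -v(uz)` and
`(zu)v = -(zv)u` whenever `u` and `v` anticommute (`left_swap`, `right_swap`). Together with
the given relations, they determine all products `eᵢeⱼ`: the seven lines of the Fano plane each span a generalized
quaternion algebra (`quaternion_line`), so `1, e₁, …, e₇` multiply by a table that depends only on
`μ₁, μ₂, μ₃` (`CayleyTable`, `cayleyTable`).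

Hence the linear map `F⁸ → A` sending the standard basis to `1, e₁, …, e₇` is multiplicative for a
product `octMul` on `F⁸` that depends only on the `μᵢ`. It is onto because its range is a
subalgebra containing the generators. It is injective (`CayleyTable.injective`): if `X` maps to
zero, averaging `X` over conjugation by `e₁`, and then by `e₂`, leaves `4 x₀ · 1 = 0`, so the
scalar coordinate of `X` vanishes; applying this to every `X eᵢ` kills the remaining coordinates.
So both `A` and `A'` are identified with the same algebra on `F⁸`.
-/

/-! ### Anticommuting elements of an alternative ring -/

section Alternative

variable {A : Type*} [NonAssocRing A]

/-- Linearized left alternative law for anticommuting `u`, `v`. -/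
theorem left_swap (alt : ∀ a b : A, (a * a) * b = a * (a * b)) {u v : A}
    (h : v * u = -(u * v)) (z : A) : u * (v * z) = -(v * (u * z)) := by
  have h1 := alt (u + v) z
  simp only [add_mul, mul_add, alt, h, neg_mul] at h1
  have h2 : u * (v * z) + v * (u * z) = 0 := by
    rw [← sub_eq_zero] at h1
    rw [← neg_eq_zero, ← h1]
    abel
  exact eq_neg_of_add_eq_zero_left h2

/-- Linearized right alternative law for anticommuting `u`, `v`. -/
theorem right_swap (alt : ∀ a b : A, (b * a) * a = b * (a * a)) {u v : A}
    (h : v * u = -(u * v)) (z : A) : (z * u) * v = -((z * v) * u) := by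
  have h1 := alt (u + v) z
  simp only [add_mul, mul_add, alt, h, mul_neg] at h1
  have h2 : (z * u) * v + (z * v) * u = 0 := by
    rw [← sub_eq_zero] at h1
    rw [← h1]
    abel
  exact eq_neg_of_add_eq_zero_left h2

variable {F : Type*} [Field F] [Module F A] [IsScalarTower F A A] [SMulCommClass F A A]

/-- Two anticommuting elements with scalar squares, together with their product, multiply as the
imaginary units of a generalized quaternion algebra. -/
theorem quaternion_line (alt₁ : ∀ a b : A, (a * a) * b = a * (a * b))
    (alt₂ : ∀ a b : A, (b * a) * a = b * (a * a)) {u v p : A} {α β : F}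
    (hu : u * u = α • (1 : A)) (hv : v * v = β • (1 : A)) (hp : u * v = p) (hq : v * u = -p) :
    u * p = α • v ∧ p * u = -(α • v) ∧ p * v = β • u ∧ v * p = -(β • u) ∧
      p * p = -((α * β) • (1 : A)) := by
  have hvu : v * u = -(u * v) := by rw [hq, hp]
  have h1 : u * p = α • v := by rw [← hp, ← alt₁, hu, smul_one_mul]
  have h2 : p * u = -(α • v) := by
    rw [← neg_neg p, ← hq, neg_mul, alt₂, hu, mul_smul_comm, mul_one]
  have h3 : p * v = β • u := by rw [← hp, alt₂, hv, mul_smul_comm, mul_one]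
  have h4 : v * p = -(β • u) := by
    rw [← neg_neg p, ← hq, mul_neg, ← alt₁, hv, smul_one_mul]
  refine ⟨h1, h2, h3, h4, ?_⟩
  have h5 : p * (u * v) = -(u * (p * v)) := left_swap alt₁ (by rw [h1, h2, neg_neg]) v
  rw [hp] at h5
  rw [h5, h3, mul_smul_comm, hu, smul_smul, mul_comm]

end Alternative

/-! ### The multiplication table -/

/-- The multiplication table of the octonion basis `1, e₁, …, e₇` with parameters
`a = e₁²`, `b = e₂²`, `c = e₄²`, where `e₃ = e₁e₂`, `e₅ = e₁e₄`, `e₆ = e₂e₄`, `e₇ = e₃e₄`.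
The field `mij` is the product `eᵢeⱼ`. -/
structure CayleyTable {F A : Type*} [Field F] [NonAssocRing A] [Module F A]
    (a b c : F) (e1 e2 e3 e4 e5 e6 e7 : A) : Prop where
  m11 : e1 * e1 = a • (1 : A)
  m22 : e2 * e2 = b • (1 : A)
  m33 : e3 * e3 = -((a * b) • (1 : A))
  m44 : e4 * e4 = c • (1 : A)
  m55 : e5 * e5 = -((a * c) • (1 : A))
  m66 : e6 * e6 = -((b * c) • (1 : A))
  m77 : e7 * e7 = (a * b * c) • (1 : A)
  m12 : e1 * e2 = e3
  m21 : e2 * e1 = -e3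
  m13 : e1 * e3 = a • e2
  m31 : e3 * e1 = -(a • e2)
  m14 : e1 * e4 = e5
  m41 : e4 * e1 = -e5
  m15 : e1 * e5 = a • e4
  m51 : e5 * e1 = -(a • e4)
  m16 : e1 * e6 = -e7
  m61 : e6 * e1 = e7
  m17 : e1 * e7 = -(a • e6)
  m71 : e7 * e1 = a • e6
  m23 : e2 * e3 = -(b • e1)
  m32 : e3 * e2 = b • e1
  m24 : e2 * e4 = e6
  m42 : e4 * e2 = -e6
  m25 : e2 * e5 = e7
  m52 : e5 * e2 = -e7
  m26 : e2 * e6 = b • e4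
  m62 : e6 * e2 = -(b • e4)
  m27 : e2 * e7 = b • e5
  m72 : e7 * e2 = -(b • e5)
  m34 : e3 * e4 = e7
  m43 : e4 * e3 = -e7
  m35 : e3 * e5 = a • e6
  m53 : e5 * e3 = -(a • e6)
  m36 : e3 * e6 = -(b • e5)
  m63 : e6 * e3 = b • e5
  m37 : e3 * e7 = -((a * b) • e4)
  m73 : e7 * e3 = (a * b) • e4
  m45 : e4 * e5 = -(c • e1)
  m54 : e5 * e4 = c • e1
  m46 : e4 * e6 = -(c • e2)
  m64 : e6 * e4 = c • e2
  m47 : e4 * e7 = -(c • e3)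
  m74 : e7 * e4 = c • e3
  m56 : e5 * e6 = c • e3
  m65 : e6 * e5 = -(c • e3)
  m57 : e5 * e7 = (a * c) • e2
  m75 : e7 * e5 = -((a * c) • e2)
  m67 : e6 * e7 = -((b * c) • e1)
  m76 : e7 * e6 = (b * c) • e1

/-- The Cayley relations, the alternative laws and the three squares determine the whole
multiplication table. -/
theorem cayleyTable {F A : Type*} [Field F] [NonAssocRing A] [Module F A] [IsScalarTower F A A]
    [SMulCommClass F A A]
    (alt₁ : ∀ a b : A, (a * a) * b = a * (a * b))
    (alt₂ : ∀ a b : A, (b * a) * a = b * (a * a)) {a b c : F} {a1 a2 a3 : A}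
    (h21 : a2 * a1 = -(a1 * a2)) (h31 : a3 * a1 = -(a1 * a3))
    (h32 : a3 * a2 = -(a2 * a3)) (h123 : (a1 * a2) * a3 = -(a1 * (a2 * a3)))
    (hs1 : a1 * a1 = a • (1 : A)) (hs2 : a2 * a2 = b • (1 : A)) (hs3 : a3 * a3 = c • (1 : A)) :
    CayleyTable a b c a1 a2 (a1 * a2) a3 (a1 * a3) (a2 * a3) ((a1 * a2) * a3) := by
  obtain ⟨m13, m31, m32, m23, m33⟩ := quaternion_line alt₁ alt₂ hs1 hs2 rfl h21
  obtain ⟨m15, m51, m54, m45, m55⟩ := quaternion_line alt₁ alt₂ hs1 hs3 rfl h31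
  obtain ⟨m26, m62, m64, m46, m66⟩ := quaternion_line alt₁ alt₂ hs2 hs3 rfl h32
  have m16 : a1 * (a2 * a3) = -((a1 * a2) * a3) := by rw [h123, neg_neg]
  have m61 : (a2 * a3) * a1 = (a1 * a2) * a3 := by
    rw [right_swap alt₂ (by rw [h31, neg_neg]), h21, neg_mul, neg_neg]
  have m25 : a2 * (a1 * a3) = (a1 * a2) * a3 := by
    rw [left_swap alt₁ (by rw [h21, neg_neg]), h123]
  have m52 : (a1 * a3) * a2 = -((a1 * a2) * a3) :=
    right_swap alt₂ (by rw [h32, neg_neg]) a1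
  have m43 : a3 * (a1 * a2) = -((a1 * a2) * a3) := by
    rw [left_swap alt₁ (by rw [h31, neg_neg]), h32, mul_neg, neg_neg, h123, neg_neg]
  rw [← neg_smul] at m33 m55 m66
  obtain ⟨m37, m73, m74, m47, m77⟩ := quaternion_line alt₁ alt₂ m33 hs3 rfl m43
  -- In this line the first unit is `a₂a₃`, so that the product is `(a₁a₂)a₃` with a plus sign.
  obtain ⟨m67, m76, m71, m17, -⟩ := quaternion_line alt₁ alt₂ m66 hs1 m61 m16
  obtain ⟨m27, m72, m75, m57, -⟩ := quaternion_line alt₁ alt₂ hs2 m55 m25 m52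
  have m35 : (a1 * a2) * (a1 * a3) = a • (a2 * a3) := by
    rw [left_swap alt₁ (by rw [m13, m31, neg_neg]), m17, neg_neg]
  have m36 : (a1 * a2) * (a2 * a3) = -(b • (a1 * a3)) := by
    rw [left_swap alt₁ (by rw [m23, m32]), m27]
  have m53 : (a1 * a3) * (a1 * a2) = -(a • (a2 * a3)) := by
    rw [right_swap alt₂ (by rw [m43, neg_neg]), m13, smul_mul_assoc]
  have m63 : (a2 * a3) * (a1 * a2) = b • (a1 * a3) := by
    rw [right_swap alt₂ (by rw [m43, neg_neg]), m23, neg_mul, smul_mul_assoc, neg_neg]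
  have m56 : (a1 * a3) * (a2 * a3) = c • (a1 * a2) := by
    rw [left_swap alt₁ (by rw [m25, m52, neg_neg]), m54, mul_smul_comm, h21, smul_neg, neg_neg]
  have m65 : (a2 * a3) * (a1 * a3) = -(c • (a1 * a2)) := by
    rw [left_swap alt₁ (by rw [m16, m61]), m64, mul_smul_comm]
  constructor <;> first | assumption | rfl | skip
  all_goals simp_all only [neg_smul, neg_neg, neg_mul]

/-! ### The coordinate model -/

/-- The octonion product on `F⁸` with parameters `a, b, c`, in coordinates with respect to the
basis of `CayleyTable`. -/
def octMul {F : Type*} [Field F] (a b c : F) (x y : Fin 8 → F) : Fin 8 → F :=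
  ![x 0 * y 0 + a * (x 1 * y 1) + b * (x 2 * y 2) - a * b * (x 3 * y 3) + c * (x 4 * y 4)
      - a * c * (x 5 * y 5) - b * c * (x 6 * y 6) + a * b * c * (x 7 * y 7),
    x 0 * y 1 + x 1 * y 0 - b * (x 2 * y 3 - x 3 * y 2) - c * (x 4 * y 5 - x 5 * y 4)
      - b * c * (x 6 * y 7 - x 7 * y 6),
    x 0 * y 2 + x 2 * y 0 + a * (x 1 * y 3 - x 3 * y 1) - c * (x 4 * y 6 - x 6 * y 4)
      + a * c * (x 5 * y 7 - x 7 * y 5),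
    x 0 * y 3 + x 3 * y 0 + (x 1 * y 2 - x 2 * y 1) - c * (x 4 * y 7 - x 7 * y 4)
      + c * (x 5 * y 6 - x 6 * y 5),
    x 0 * y 4 + x 4 * y 0 + a * (x 1 * y 5 - x 5 * y 1) + b * (x 2 * y 6 - x 6 * y 2)
      - a * b * (x 3 * y 7 - x 7 * y 3),
    x 0 * y 5 + x 5 * y 0 + (x 1 * y 4 - x 4 * y 1) + b * (x 2 * y 7 - x 7 * y 2)
      - b * (x 3 * y 6 - x 6 * y 3),
    x 0 * y 6 + x 6 * y 0 + (x 2 * y 4 - x 4 * y 2) - a * (x 1 * y 7 - x 7 * y 1)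
      + a * (x 3 * y 5 - x 5 * y 3),
    x 0 * y 7 + x 7 * y 0 + (x 3 * y 4 - x 4 * y 3) - (x 1 * y 6 - x 6 * y 1)
      + (x 2 * y 5 - x 5 * y 2)]

/-- The linear map `F⁸ → A` sending the standard basis to `1, e₁, …, e₇`. -/
def octMap (F : Type*) {A : Type*} [Field F] [NonAssocRing A] [Module F A]
    (e1 e2 e3 e4 e5 e6 e7 : A) : (Fin 8 → F) →ₗ[F] A where
  toFun x := x 0 • (1 : A) + x 1 • e1 + x 2 • e2 + x 3 • e3 + x 4 • e4 + x 5 • e5 + x 6 • e6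
    + x 7 • e7
  map_add' x y := by simp only [Pi.add_apply]; module
  map_smul' r x := by simp only [Pi.smul_apply, smul_eq_mul, RingHom.id_apply]; module

namespace CayleyTable

variable {F A : Type*} [Field F] [NonAssocRing A] [Module F A] [IsScalarTower F A A]
  [SMulCommClass F A A] {a b c : F} {e1 e2 e3 e4 e5 e6 e7 : A}

theorem map_mul (T : CayleyTable a b c e1 e2 e3 e4 e5 e6 e7) (x y : Fin 8 → F) :
    octMap F e1 e2 e3 e4 e5 e6 e7 (octMul a b c x y) =
      octMap F e1 e2 e3 e4 e5 e6 e7 x * octMap F e1 e2 e3 e4 e5 e6 e7 y := by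
  obtain ⟨⟩ := T
  simp only [octMap, octMul, LinearMap.coe_mk, AddHom.coe_mk, add_mul, mul_add, smul_mul_assoc,
    mul_smul_comm, one_mul, mul_one, Matrix.cons_val, *]
  module

/-- The scalar coordinate of an element of the kernel vanishes: averaging over conjugation by
`e₁` leaves `x₀ + x₁e₁`, and then averaging over conjugation by `e₂` leaves `x₀`. -/
theorem coord_zero [Nontrivial A] (T : CayleyTable a b c e1 e2 e3 e4 e5 e6 e7)
    (h2 : (2 : F) ≠ 0) (ha : a ≠ 0) (hb : b ≠ 0) {x : Fin 8 → F}
    (hx : octMap F e1 e2 e3 e4 e5 e6 e7 x = 0) : x 0 = 0 := by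
  have h1 : a • octMap F e1 e2 e3 e4 e5 e6 e7 x + (e1 * octMap F e1 e2 e3 e4 e5 e6 e7 x) * e1
      = (2 * a) • (x 0 • (1 : A) + x 1 • e1) := by
    simp only [octMap, LinearMap.coe_mk, AddHom.coe_mk, add_mul, mul_add, smul_mul_assoc,
      mul_smul_comm, one_mul, mul_one, neg_mul, T.m11, T.m12, T.m31, T.m13, T.m21, T.m14,
      T.m51, T.m15, T.m41, T.m16, T.m71, T.m17, T.m61]
    module
  rw [hx, smul_zero, mul_zero, zero_mul, add_zero] at h1
  have hz := (smul_eq_zero.mp h1.symm).resolve_left (mul_ne_zero h2 ha)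
  have h3 : b • (x 0 • (1 : A) + x 1 • e1) + (e2 * (x 0 • (1 : A) + x 1 • e1)) * e2
      = (2 * b * x 0) • (1 : A) := by
    simp only [add_mul, mul_add, smul_mul_assoc, mul_smul_comm, mul_one, neg_mul,
      T.m22, T.m21, T.m32]
    module
  rw [hz, smul_zero, mul_zero, zero_mul, add_zero] at h3
  have h4 := (smul_eq_zero.mp h3.symm).resolve_right one_ne_zero
  exact (mul_eq_zero.mp h4).resolve_left (mul_ne_zero h2 hb)

theorem injective [Nontrivial A] (T : CayleyTable a b c e1 e2 e3 e4 e5 e6 e7)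
    (h2 : (2 : F) ≠ 0) (ha : a ≠ 0) (hb : b ≠ 0) (hc : c ≠ 0) :
    Function.Injective (octMap F e1 e2 e3 e4 e5 e6 e7) := by
  rw [injective_iff_map_eq_zero]
  intro x hx
  -- The scalar coordinate of `x eᵢ` is a nonzero multiple of `xᵢ`.
  have key (i : Fin 8) : octMul a b c x (Pi.single i 1) 0 = 0 :=
    T.coord_zero h2 ha hb (by rw [T.map_mul, hx, zero_mul])
  ext i
  have hi := key i
  fin_cases i <;> simpa [octMul, Pi.single_apply, ha, hb, hc] using hi

theorem surjective (T : CayleyTable a b c e1 e2 e3 e4 e5 e6 e7)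
    (hgen : NonUnitalAlgebra.adjoin F ({1, e1, e2, e4} : Set A) = ⊤) :
    Function.Surjective (octMap F e1 e2 e3 e4 e5 e6 e7) := by
  let S : NonUnitalSubalgebra F A :=
    { LinearMap.range (octMap F e1 e2 e3 e4 e5 e6 e7) with
      mul_mem' := by
        rintro _ _ ⟨x, rfl⟩ ⟨y, rfl⟩
        exact ⟨_, T.map_mul x y⟩ }
  have hS : NonUnitalAlgebra.adjoin F ({1, e1, e2, e4} : Set A) ≤ S := by
    apply NonUnitalAlgebra.adjoin_le
    rintro z (rfl | rfl | rfl | rfl)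
    · exact ⟨Pi.single 0 1, by simp [octMap]⟩
    · exact ⟨Pi.single 1 1, by simp [octMap]⟩
    · exact ⟨Pi.single 2 1, by simp [octMap]⟩
    · exact ⟨Pi.single 4 1, by simp [octMap]⟩
  intro z
  have hz : z ∈ NonUnitalAlgebra.adjoin F ({1, e1, e2, e4} : Set A) := by
    rw [hgen]; trivial
  exact hS hz

end CayleyTable

/-! ### Uniqueness -/

/-- **Theorem 3.6, uniqueness.** Over a field `F` of characteristic `≠ 2`,
any two nonzero unital alternative `F`-algebras generated by triples satisfying the
Cayley relations with the same squares `μ1·1, μ2·1, μ3·1` (`μᵢ ≠ 0`) are isomorphic as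
`F`-algebras, by an isomorphism carrying generators to generators. -/
theorem octonion_presentation_unique (F : Type*) [Field F] (hchar : (2 : F) ≠ 0)
    (μ1 μ2 μ3 : F) (hμ1 : μ1 ≠ 0) (hμ2 : μ2 ≠ 0) (hμ3 : μ3 ≠ 0)
    (A : Type*) [NonAssocRing A] [Module F A] [IsScalarTower F A A] [SMulCommClass F A A]
    [Nontrivial A]
    (altA₁ : ∀ a b : A, (a * a) * b = a * (a * b))
    (altA₂ : ∀ a b : A, (b * a) * a = b * (a * a))
    (a1 a2 a3 : A)
    (hgenA : NonUnitalAlgebra.adjoin F ({1, a1, a2, a3} : Set A) = ⊤)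
    (hA21 : a2 * a1 = -(a1 * a2)) (hA31 : a3 * a1 = -(a1 * a3))
    (hA32 : a3 * a2 = -(a2 * a3)) (hA123 : (a1 * a2) * a3 = -(a1 * (a2 * a3)))
    (hAsq1 : a1 * a1 = μ1 • (1 : A)) (hAsq2 : a2 * a2 = μ2 • (1 : A))
    (hAsq3 : a3 * a3 = μ3 • (1 : A))
    (A' : Type*) [NonAssocRing A'] [Module F A'] [IsScalarTower F A' A'] [SMulCommClass F A' A']
    [Nontrivial A']
    (altA'₁ : ∀ a b : A', (a * a) * b = a * (a * b))
    (altA'₂ : ∀ a b : A', (b * a) * a = b * (a * a))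
    (b1 b2 b3 : A')
    (hgenA' : NonUnitalAlgebra.adjoin F ({1, b1, b2, b3} : Set A') = ⊤)
    (hB21 : b2 * b1 = -(b1 * b2)) (hB31 : b3 * b1 = -(b1 * b3))
    (hB32 : b3 * b2 = -(b2 * b3)) (hB123 : (b1 * b2) * b3 = -(b1 * (b2 * b3)))
    (hBsq1 : b1 * b1 = μ1 • (1 : A')) (hBsq2 : b2 * b2 = μ2 • (1 : A'))
    (hBsq3 : b3 * b3 = μ3 • (1 : A')) :
    ∃ e : A ≃ₗ[F] A', (∀ x y : A, e (x * y) = e x * e y) ∧ e 1 = 1 ∧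
      e a1 = b1 ∧ e a2 = b2 ∧ e a3 = b3 := by
  have T := cayleyTable altA₁ altA₂ hA21 hA31 hA32 hA123 hAsq1 hAsq2 hAsq3
  have T' := cayleyTable altA'₁ altA'₂ hB21 hB31 hB32 hB123 hBsq1 hBsq2 hBsq3
  let f := LinearEquiv.ofBijective _ ⟨T.injective hchar hμ1 hμ2 hμ3, T.surjective hgenA⟩
  let g := LinearEquiv.ofBijective _ ⟨T'.injective hchar hμ1 hμ2 hμ3, T'.surjective hgenA'⟩
  have hf (x y) : f (octMul μ1 μ2 μ3 x y) = f x * f y := T.map_mul x y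
  have hg (x y) : g (octMul μ1 μ2 μ3 x y) = g x * g y := T'.map_mul x y
  have transport {i : Fin 8} {z : A} {w : A'} (hz : f (Pi.single i 1) = z)
      (hw : g (Pi.single i 1) = w) : (f.symm.trans g) z = w := by
    rw [← hz, ← hw, LinearEquiv.trans_apply, LinearEquiv.symm_apply_apply]
  refine ⟨f.symm.trans g, ?_, transport (i := 0) ?_ ?_, transport (i := 1) ?_ ?_,
    transport (i := 2) ?_ ?_, transport (i := 4) ?_ ?_⟩
  · intro x y
    obtain ⟨x, rfl⟩ := f.surjective x
    obtain ⟨y, rfl⟩ := f.surjective y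
    rw [← hf]
    simp only [LinearEquiv.trans_apply, LinearEquiv.symm_apply_apply, hg]
  all_goals simp [f, g, octMap]
end

section
/- Let F be a field of characteristic ≠ 2, let μ1, μ2, μ3 ∈ F be nonzero, and let A be a nonzero unital alternative F-algebra generated as an F-algebra by elements a1, a2, a3 satisfying the Cayley relations and a1*a1 = μ1·1, a2*a2 = μ2·1, a3*a3 = μ3·1. Then A is central simple: its only two-sided ideals are 0 and A, and its center equals F·1. -/
/-!
Write `p = a1 a2`, `q = a1 a3`, `r = a2 a3`, `t = a1 (a2 a3)`.

Linearising the alternative laws, if `u` and `v` anticommute then `u (v y) = -(v (u y))` and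
`(y u) v = -((y v) u)` for all `y`. So the left multiplications by `a1`, `a2`, `a3` satisfy Clifford
relations, as do the right multiplications. This determines how each `aᵢ` acts on either side of
the eight elements `1, a1, a2, a3, p, q, r, t`; in particular the span `V` of these is stable under
left multiplication by each `aᵢ`, and each of `p, q, r, t` anticommutes with each `aᵢ`. The remaining
products follow: if `u ∈ V` anticommutes with all `aᵢ`, then `u (aᵢ y) = -(aᵢ (u y))`, and since `V`
is obtained from `1` by left multiplications by the `aᵢ`, one gets `u V ⊆ V`. Hence `V` is a
subalgebra, and `V = A` (`CayleyTriple.exists_coords`).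

The averaging operator `x ↦ μᵢ x + (aᵢ x) aᵢ` multiplies `1` and `aᵢ` by `2 μᵢ` and kills the other
six elements, so applying it for `i = 1` and then for `i = 2` extracts the coordinate at `1`:
`x ↦ 4 μ1 μ2 c₀ • 1` (`CayleyTriple.extract_eq`). A nonzero element of a two-sided ideal can be
moved by left multiplications by the `aᵢ` so that its coordinate at `1` is nonzero, whence the ideal
contains `1`. A central `z` is multiplied by `4 μ1 μ2`, whence `z = c₀ • 1`. Linear independence of
the eight elements is never needed.
-/

set_option linter.unusedSectionVars false

/-! ### Clifford relations in alternative rings -/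

section Alternative

variable {A : Type*} [NonAssocRing A]

/-- The linearised left alternative law for anticommuting `u` and `v`. -/
theorem left_clifford (alt₁ : ∀ a b : A, (a * a) * b = a * (a * b)) {u v : A}
    (h : u * v = -(v * u)) (y : A) : u * (v * y) = -(v * (u * y)) := by
  have h1 := alt₁ (u + v) y
  simp only [add_mul, mul_add, alt₁, h, neg_mul] at h1
  have h2 : u * (v * y) + v * (u * y) = 0 := by
    rw [← sub_eq_zero] at h1
    rw [← neg_eq_zero, ← h1]; abel
  exact eq_neg_of_add_eq_zero_left h2

/-- The linearised right alternative law for anticommuting `u` and `v`. -/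
theorem right_clifford (alt₂ : ∀ a b : A, (b * a) * a = b * (a * a)) {u v : A}
    (h : u * v = -(v * u)) (y : A) : (y * u) * v = -((y * v) * u) := by
  have h1 := alt₂ (u + v) y
  simp only [add_mul, mul_add, alt₂, h, mul_neg] at h1
  have h2 : (y * u) * v + (y * v) * u = 0 := by
    rw [← sub_eq_zero] at h1
    rw [← h1]; abel
  exact eq_neg_of_add_eq_zero_left h2

end Alternative

/-- Three elements `a1, a2, a3` of an alternative algebra satisfying the Cayley relations, with
`aᵢ * aᵢ = μᵢ • 1`. -/
structure CayleyTriple (F : Type*) [Field F] (A : Type*) [NonAssocRing A] [Module F A]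
    (μ1 μ2 μ3 : F) (a1 a2 a3 : A) : Prop where
  alt₁ : ∀ a b : A, (a * a) * b = a * (a * b)
  alt₂ : ∀ a b : A, (b * a) * a = b * (a * a)
  h21 : a2 * a1 = -(a1 * a2)
  h31 : a3 * a1 = -(a1 * a3)
  h32 : a3 * a2 = -(a2 * a3)
  h123 : (a1 * a2) * a3 = -(a1 * (a2 * a3))
  hsq1 : a1 * a1 = μ1 • (1 : A)
  hsq2 : a2 * a2 = μ2 • (1 : A)
  hsq3 : a3 * a3 = μ3 • (1 : A)

/-- The linear combination with coordinates `c0, …, c7` of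
`1, a1, a2, a3, a1 a2, a1 a3, a2 a3, a1 (a2 a3)`. -/
def octComb {F : Type*} [Field F] {A : Type*} [NonAssocRing A] [Module F A] (a1 a2 a3 : A)
    (c0 c1 c2 c3 c4 c5 c6 c7 : F) : A :=
  c0 • (1 : A) + c1 • a1 + c2 • a2 + c3 • a3 + c4 • (a1 * a2) + c5 • (a1 * a3) + c6 • (a2 * a3)
    + c7 • (a1 * (a2 * a3))

/-- The composite of the averaging operators `x ↦ μᵢ • x + (aᵢ * x) * aᵢ` for `i = 1` and then
`i = 2`. -/
def octExtract {F : Type*} [Field F] {A : Type*} [NonAssocRing A] [Module F A] (μ1 μ2 : F)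
    (a1 a2 : A) (x : A) : A :=
  μ2 • (μ1 • x + (a1 * x) * a1) + (a2 * (μ1 • x + (a1 * x) * a1)) * a2

/-! ### Action of the generators on themselves and on products -/

namespace CayleyTriple

variable {F : Type*} [Field F] {A : Type*} [NonAssocRing A] [Module F A] [IsScalarTower F A A]
  [SMulCommClass F A A] {μ1 μ2 μ3 : F} {a1 a2 a3 : A}

theorem h12 (T : CayleyTriple F A μ1 μ2 μ3 a1 a2 a3) : a1 * a2 = -(a2 * a1) := by
  rw [T.h21, neg_neg]

theorem h13 (T : CayleyTriple F A μ1 μ2 μ3 a1 a2 a3) : a1 * a3 = -(a3 * a1) := by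
  rw [T.h31, neg_neg]

theorem h23 (T : CayleyTriple F A μ1 μ2 μ3 a1 a2 a3) : a2 * a3 = -(a3 * a2) := by
  rw [T.h32, neg_neg]

theorem sq1_mul (T : CayleyTriple F A μ1 μ2 μ3 a1 a2 a3) (x : A) :
    a1 * (a1 * x) = μ1 • x := by
  rw [← T.alt₁, T.hsq1, smul_mul_assoc, one_mul]

theorem sq2_mul (T : CayleyTriple F A μ1 μ2 μ3 a1 a2 a3) (x : A) :
    a2 * (a2 * x) = μ2 • x := by
  rw [← T.alt₁, T.hsq2, smul_mul_assoc, one_mul]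

theorem sq3_mul (T : CayleyTriple F A μ1 μ2 μ3 a1 a2 a3) (x : A) :
    a3 * (a3 * x) = μ3 • x := by
  rw [← T.alt₁, T.hsq3, smul_mul_assoc, one_mul]

theorem mul_sq1 (T : CayleyTriple F A μ1 μ2 μ3 a1 a2 a3) (x : A) :
    (x * a1) * a1 = μ1 • x := by
  rw [T.alt₂, T.hsq1, mul_smul_comm, mul_one]

theorem mul_sq2 (T : CayleyTriple F A μ1 μ2 μ3 a1 a2 a3) (x : A) :
    (x * a2) * a2 = μ2 • x := by
  rw [T.alt₂, T.hsq2, mul_smul_comm, mul_one]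

theorem mul_sq3 (T : CayleyTriple F A μ1 μ2 μ3 a1 a2 a3) (x : A) :
    (x * a3) * a3 = μ3 • x := by
  rw [T.alt₂, T.hsq3, mul_smul_comm, mul_one]

theorem left21 (T : CayleyTriple F A μ1 μ2 μ3 a1 a2 a3) (x : A) :
    a2 * (a1 * x) = -(a1 * (a2 * x)) := left_clifford T.alt₁ T.h21 x

theorem left31 (T : CayleyTriple F A μ1 μ2 μ3 a1 a2 a3) (x : A) :
    a3 * (a1 * x) = -(a1 * (a3 * x)) := left_clifford T.alt₁ T.h31 x

theorem left32 (T : CayleyTriple F A μ1 μ2 μ3 a1 a2 a3) (x : A) :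
    a3 * (a2 * x) = -(a2 * (a3 * x)) := left_clifford T.alt₁ T.h32 x

/-! ### The elements `p, q, r, t` anticommute with the generators -/

theorem p_a1 (T : CayleyTriple F A μ1 μ2 μ3 a1 a2 a3) :
    (a1 * a2) * a1 = -(a1 * (a1 * a2)) := by
  rw [T.sq1_mul, T.h12, neg_mul, T.mul_sq1]

theorem p_a2 (T : CayleyTriple F A μ1 μ2 μ3 a1 a2 a3) :
    (a1 * a2) * a2 = -(a2 * (a1 * a2)) := by
  rw [T.mul_sq2, T.h12, mul_neg, T.sq2_mul, neg_neg]

theorem p_a3 (T : CayleyTriple F A μ1 μ2 μ3 a1 a2 a3) :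
    (a1 * a2) * a3 = -(a3 * (a1 * a2)) := by
  rw [T.h123, T.left31, T.h32, mul_neg, neg_neg]

theorem q_a1 (T : CayleyTriple F A μ1 μ2 μ3 a1 a2 a3) :
    (a1 * a3) * a1 = -(a1 * (a1 * a3)) := by
  rw [T.sq1_mul, T.h13, neg_mul, T.mul_sq1]

theorem q_mul_a2 (T : CayleyTriple F A μ1 μ2 μ3 a1 a2 a3) :
    (a1 * a3) * a2 = a1 * (a2 * a3) := by
  rw [right_clifford T.alt₂ T.h32, T.h123, neg_neg]

theorem q_a2 (T : CayleyTriple F A μ1 μ2 μ3 a1 a2 a3) :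
    (a1 * a3) * a2 = -(a2 * (a1 * a3)) := by
  rw [T.q_mul_a2, T.left21, neg_neg]

theorem q_a3 (T : CayleyTriple F A μ1 μ2 μ3 a1 a2 a3) :
    (a1 * a3) * a3 = -(a3 * (a1 * a3)) := by
  rw [T.mul_sq3, T.h13, mul_neg, T.sq3_mul, neg_neg]

theorem r_a1 (T : CayleyTriple F A μ1 μ2 μ3 a1 a2 a3) :
    (a2 * a3) * a1 = -(a1 * (a2 * a3)) := by
  rw [right_clifford T.alt₂ T.h31, T.h21, neg_mul, neg_neg, T.h123]

theorem r_a2 (T : CayleyTriple F A μ1 μ2 μ3 a1 a2 a3) :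
    (a2 * a3) * a2 = -(a2 * (a2 * a3)) := by
  rw [T.sq2_mul, T.h23, neg_mul, T.mul_sq2]

theorem r_a3 (T : CayleyTriple F A μ1 μ2 μ3 a1 a2 a3) :
    (a2 * a3) * a3 = -(a3 * (a2 * a3)) := by
  rw [T.mul_sq3, T.h23, mul_neg, T.sq3_mul, neg_neg]

theorem t_a1 (T : CayleyTriple F A μ1 μ2 μ3 a1 a2 a3) :
    (a1 * (a2 * a3)) * a1 = -(a1 * (a1 * (a2 * a3))) := by
  rw [← neg_neg (a1 * (a2 * a3)), ← T.r_a1, neg_mul, T.mul_sq1, T.r_a1, neg_neg, T.sq1_mul]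

theorem t_a2 (T : CayleyTriple F A μ1 μ2 μ3 a1 a2 a3) :
    (a1 * (a2 * a3)) * a2 = -(a2 * (a1 * (a2 * a3))) := by
  rw [T.left21, T.sq2_mul, ← T.q_mul_a2, T.mul_sq2, mul_smul_comm, neg_neg]

theorem t_a3 (T : CayleyTriple F A μ1 μ2 μ3 a1 a2 a3) :
    (a1 * (a2 * a3)) * a3 = -(a3 * (a1 * (a2 * a3))) := by
  rw [← neg_neg (a1 * (a2 * a3)), ← T.h123, neg_mul, T.mul_sq3, T.p_a3, neg_neg, T.sq3_mul]

/-! ### Left multiplication by the generators in coordinates -/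

theorem a1_mul_comb (T : CayleyTriple F A μ1 μ2 μ3 a1 a2 a3) (c0 c1 c2 c3 c4 c5 c6 c7 : F) :
    a1 * octComb a1 a2 a3 c0 c1 c2 c3 c4 c5 c6 c7 =
      octComb a1 a2 a3 (μ1 * c1) c0 (μ1 * c4) (μ1 * c5) c2 c3 (μ1 * c7) c6 := by
  simp only [octComb, mul_add, mul_smul_comm, mul_one, T.sq1_mul, T.hsq1]
  module

theorem a2_mul_comb (T : CayleyTriple F A μ1 μ2 μ3 a1 a2 a3) (c0 c1 c2 c3 c4 c5 c6 c7 : F) :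
    a2 * octComb a1 a2 a3 c0 c1 c2 c3 c4 c5 c6 c7 =
      octComb a1 a2 a3 (μ2 * c2) (-(μ2 * c4)) c0 (μ2 * c6) (-c1) (-(μ2 * c7)) c3 (-c5) := by
  simp only [octComb, mul_add, mul_smul_comm, mul_one, T.left21, T.sq2_mul, T.hsq2, T.h21]
  module

theorem a3_mul_comb (T : CayleyTriple F A μ1 μ2 μ3 a1 a2 a3) (c0 c1 c2 c3 c4 c5 c6 c7 : F) :
    a3 * octComb a1 a2 a3 c0 c1 c2 c3 c4 c5 c6 c7 =
      octComb a1 a2 a3 (μ3 * c3) (-(μ3 * c5)) (-(μ3 * c6)) c0 (μ3 * c7) (-c1) (-c2) c4 := by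
  simp only [octComb, mul_add, mul_smul_comm, mul_one, mul_neg, T.left31, T.left32, T.hsq3,
    T.h31, T.h32]
  module

/-! ### The eight elements span the algebra -/

/-- The span of `1, a1, a2, a3, a1 a2, a1 a3, a2 a3, a1 (a2 a3)`. -/
def octSpan (F : Type*) [Field F] {A : Type*} [NonAssocRing A] [Module F A] (a1 a2 a3 : A) :
    Submodule F A where
  carrier := {x | ∃ c0 c1 c2 c3 c4 c5 c6 c7 : F, x = octComb a1 a2 a3 c0 c1 c2 c3 c4 c5 c6 c7}
  zero_mem' := ⟨0, 0, 0, 0, 0, 0, 0, 0, by simp [octComb]⟩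
  add_mem' := by
    rintro _ _ ⟨c0, c1, c2, c3, c4, c5, c6, c7, rfl⟩ ⟨d0, d1, d2, d3, d4, d5, d6, d7, rfl⟩
    refine ⟨c0 + d0, c1 + d1, c2 + d2, c3 + d3, c4 + d4, c5 + d5, c6 + d6, c7 + d7, ?_⟩
    simp only [octComb]
    module
  smul_mem' := by
    rintro k _ ⟨c0, c1, c2, c3, c4, c5, c6, c7, rfl⟩
    refine ⟨k * c0, k * c1, k * c2, k * c3, k * c4, k * c5, k * c6, k * c7, ?_⟩
    simp only [octComb]
    module

theorem one_mem_octSpan : (1 : A) ∈ octSpan F a1 a2 a3 :=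
  ⟨1, 0, 0, 0, 0, 0, 0, 0, by simp [octComb]⟩

theorem a1_mul_mem (T : CayleyTriple F A μ1 μ2 μ3 a1 a2 a3) {x : A}
    (hx : x ∈ octSpan F a1 a2 a3) : a1 * x ∈ octSpan F a1 a2 a3 := by
  obtain ⟨c0, c1, c2, c3, c4, c5, c6, c7, rfl⟩ := hx
  exact ⟨_, _, _, _, _, _, _, _, T.a1_mul_comb ..⟩

theorem a2_mul_mem (T : CayleyTriple F A μ1 μ2 μ3 a1 a2 a3) {x : A}
    (hx : x ∈ octSpan F a1 a2 a3) : a2 * x ∈ octSpan F a1 a2 a3 := by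
  obtain ⟨c0, c1, c2, c3, c4, c5, c6, c7, rfl⟩ := hx
  exact ⟨_, _, _, _, _, _, _, _, T.a2_mul_comb ..⟩

theorem a3_mul_mem (T : CayleyTriple F A μ1 μ2 μ3 a1 a2 a3) {x : A}
    (hx : x ∈ octSpan F a1 a2 a3) : a3 * x ∈ octSpan F a1 a2 a3 := by
  obtain ⟨c0, c1, c2, c3, c4, c5, c6, c7, rfl⟩ := hx
  exact ⟨_, _, _, _, _, _, _, _, T.a3_mul_comb ..⟩

/-- Left multiplication by an element `u` of the span anticommuting with the generators can be
moved past the generators, so it preserves the span because `u * 1` lies in it. -/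
theorem mul_mem_of_anticomm (T : CayleyTriple F A μ1 μ2 μ3 a1 a2 a3) {u x : A}
    (hu : u ∈ octSpan F a1 a2 a3) (h1 : u * a1 = -(a1 * u)) (h2 : u * a2 = -(a2 * u))
    (h3 : u * a3 = -(a3 * u)) (hx : x ∈ octSpan F a1 a2 a3) : u * x ∈ octSpan F a1 a2 a3 := by
  have m1 := T.a1_mul_mem hu
  have m2 := T.a2_mul_mem hu
  have m3 := T.a3_mul_mem hu
  obtain ⟨c0, c1, c2, c3, c4, c5, c6, c7, rfl⟩ := hx
  simp only [octComb, mul_add, mul_smul_comm, mul_one, left_clifford T.alt₁ h1,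
    left_clifford T.alt₁ h2, h1, h2, h3, mul_neg, neg_neg]
  have m12 := T.a1_mul_mem m2
  have m13 := T.a1_mul_mem m3
  have m23 := T.a2_mul_mem m3
  have m123 := T.a1_mul_mem m23
  repeat' apply Submodule.add_mem
  all_goals
    apply Submodule.smul_mem
    first
      | assumption
      | (apply Submodule.neg_mem; assumption)

/-- A generator preserves the span by the coordinate formulas; the four products of generators
preserve it because they anticommute with the generators. -/
theorem mul_mem_octSpan (T : CayleyTriple F A μ1 μ2 μ3 a1 a2 a3) {x y : A}
    (hx : x ∈ octSpan F a1 a2 a3) (hy : y ∈ octSpan F a1 a2 a3) :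
    x * y ∈ octSpan F a1 a2 a3 := by
  have e3 : a3 ∈ octSpan F a1 a2 a3 := by simpa using T.a3_mul_mem one_mem_octSpan
  have e2 : a2 ∈ octSpan F a1 a2 a3 := by simpa using T.a2_mul_mem one_mem_octSpan
  have p := T.mul_mem_of_anticomm (T.a1_mul_mem e2) T.p_a1 T.p_a2 T.p_a3 hy
  have q := T.mul_mem_of_anticomm (T.a1_mul_mem e3) T.q_a1 T.q_a2 T.q_a3 hy
  have r := T.mul_mem_of_anticomm (T.a2_mul_mem e3) T.r_a1 T.r_a2 T.r_a3 hy
  have t := T.mul_mem_of_anticomm (T.a1_mul_mem (T.a2_mul_mem e3)) T.t_a1 T.t_a2 T.t_a3 hy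
  have m1 := T.a1_mul_mem hy
  have m2 := T.a2_mul_mem hy
  have m3 := T.a3_mul_mem hy
  obtain ⟨c0, c1, c2, c3, c4, c5, c6, c7, rfl⟩ := hx
  simp only [octComb, add_mul, smul_mul_assoc, one_mul]
  repeat' apply Submodule.add_mem
  all_goals
    apply Submodule.smul_mem
    assumption

theorem exists_coords (T : CayleyTriple F A μ1 μ2 μ3 a1 a2 a3)
    (hgen : NonUnitalAlgebra.adjoin F ({1, a1, a2, a3} : Set A) = ⊤) (x : A) :
    ∃ c0 c1 c2 c3 c4 c5 c6 c7 : F, x = octComb a1 a2 a3 c0 c1 c2 c3 c4 c5 c6 c7 := by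
  let S : NonUnitalSubalgebra F A :=
    { octSpan F a1 a2 a3 with mul_mem' := fun hx hy => T.mul_mem_octSpan hx hy }
  have hS : NonUnitalAlgebra.adjoin F ({1, a1, a2, a3} : Set A) ≤ S := by
    apply NonUnitalAlgebra.adjoin_le
    have e1 := T.a1_mul_mem one_mem_octSpan
    have e2 := T.a2_mul_mem one_mem_octSpan
    have e3 := T.a3_mul_mem one_mem_octSpan
    rw [mul_one] at e1 e2 e3
    rintro y (rfl | rfl | rfl | rfl)
    exacts [one_mem_octSpan, e1, e2, e3]
  rw [hgen] at hS
  exact hS (x := x) trivial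

/-! ### Extracting the coordinate at `1`, and central simplicity -/

theorem extract_eq (T : CayleyTriple F A μ1 μ2 μ3 a1 a2 a3) (c0 c1 c2 c3 c4 c5 c6 c7 : F) :
    octExtract μ1 μ2 a1 a2 (octComb a1 a2 a3 c0 c1 c2 c3 c4 c5 c6 c7) =
      (4 * μ1 * μ2 * c0) • (1 : A) := by
  have step1 : μ1 • octComb a1 a2 a3 c0 c1 c2 c3 c4 c5 c6 c7 +
      (a1 * octComb a1 a2 a3 c0 c1 c2 c3 c4 c5 c6 c7) * a1 =
      (2 * μ1 * c0) • (1 : A) + (2 * μ1 * c1) • a1 := by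
    rw [T.a1_mul_comb]
    simp only [octComb, add_mul, smul_mul_assoc, one_mul, T.hsq1, T.h21, T.h31, T.p_a1, T.q_a1,
      T.r_a1, T.t_a1, T.sq1_mul]
    module
  rw [octExtract, step1]
  simp only [mul_add, add_mul, mul_smul_comm, smul_mul_assoc, mul_one, T.hsq2, T.h21, neg_mul,
    T.mul_sq2]
  module

/-- Since `(aᵢ * z) * aᵢ = (z * aᵢ) * aᵢ = μᵢ • z` for central `z`, each averaging operator acts on
`z` as the scalar `2 μᵢ`. -/
theorem extract_central (T : CayleyTriple F A μ1 μ2 μ3 a1 a2 a3) {z : A}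
    (hz : IsMulCentral z) : octExtract μ1 μ2 a1 a2 z = (4 * μ1 * μ2) • z := by
  have hz' : ∀ u : A, u * z = z * u := fun u => (hz.comm u).symm
  simp only [octExtract, mul_add, add_mul, mul_smul_comm, smul_mul_assoc, hz', T.mul_sq1,
    T.mul_sq2]
  module

theorem smul_mem_ideal (I : TwoSidedIdeal A) (c : F) {x : A} (hx : x ∈ I) : c • x ∈ I := by
  simpa using I.mul_mem_left (c • (1 : A)) x hx

theorem extract_mem (I : TwoSidedIdeal A) {x : A} (hx : x ∈ I) :
    octExtract μ1 μ2 a1 a2 x ∈ I := by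
  have h1 : μ1 • x + (a1 * x) * a1 ∈ I :=
    I.add_mem (smul_mem_ideal I _ hx) (I.mul_mem_right _ _ (I.mul_mem_left _ _ hx))
  exact I.add_mem (smul_mem_ideal I _ h1) (I.mul_mem_right _ _ (I.mul_mem_left _ _ h1))

theorem ideal_eq_top (T : CayleyTriple F A μ1 μ2 μ3 a1 a2 a3) (hchar : (2 : F) ≠ 0)
    (hμ1 : μ1 ≠ 0) (hμ2 : μ2 ≠ 0) (I : TwoSidedIdeal A) {c0 c1 c2 c3 c4 c5 c6 c7 : F}
    (hx : octComb a1 a2 a3 c0 c1 c2 c3 c4 c5 c6 c7 ∈ I) (hc : c0 ≠ 0) : I = ⊤ := by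
  have h := extract_mem (μ1 := μ1) (μ2 := μ2) (a1 := a1) (a2 := a2) I hx
  rw [T.extract_eq] at h
  have h4 : (4 : F) ≠ 0 := by
    rw [show (4 : F) = 2 * 2 by norm_num]
    exact mul_ne_zero hchar hchar
  have hk : 4 * μ1 * μ2 * c0 ≠ 0 := by simp [h4, hμ1, hμ2, hc]
  rw [← I.one_mem_iff]
  have h1 := smul_mem_ideal I (4 * μ1 * μ2 * c0)⁻¹ h
  rwa [smul_smul, inv_mul_cancel₀ hk, one_smul] at h1

theorem ideal_eq_bot_or_top (T : CayleyTriple F A μ1 μ2 μ3 a1 a2 a3) (hchar : (2 : F) ≠ 0)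
    (hμ1 : μ1 ≠ 0) (hμ2 : μ2 ≠ 0) (hμ3 : μ3 ≠ 0)
    (hgen : NonUnitalAlgebra.adjoin F ({1, a1, a2, a3} : Set A) = ⊤) (I : TwoSidedIdeal A) :
    I = ⊥ ∨ I = ⊤ := by
  by_contra! hI
  obtain ⟨hbot, htop⟩ := hI
  apply hbot
  rw [eq_bot_iff]
  intro x hx
  rw [TwoSidedIdeal.mem_bot]
  obtain ⟨c0, c1, c2, c3, c4, c5, c6, c7, rfl⟩ := T.exists_coords hgen x
  have key : ∀ {d0 d1 d2 d3 d4 d5 d6 d7 : F},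
      octComb a1 a2 a3 d0 d1 d2 d3 d4 d5 d6 d7 ∈ I → d0 = 0 := fun h => by
    by_contra hd
    exact htop (T.ideal_eq_top hchar hμ1 hμ2 I h hd)
  -- Left multiplication by the generators brings each coordinate, up to units, to the place of `1`.
  have l1 := I.mul_mem_left a1 _ hx
  have l2 := I.mul_mem_left a2 _ hx
  have l3 := I.mul_mem_left a3 _ hx
  rw [T.a1_mul_comb] at l1
  rw [T.a2_mul_comb] at l2
  rw [T.a3_mul_comb] at l3
  have l21 := I.mul_mem_left a2 _ l1
  have l31 := I.mul_mem_left a3 _ l1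
  have l32 := I.mul_mem_left a3 _ l2
  rw [T.a2_mul_comb] at l21
  rw [T.a3_mul_comb] at l31 l32
  have l321 := I.mul_mem_left a3 _ l21
  rw [T.a3_mul_comb] at l321
  have k0 := key hx
  have k1 := key l1
  have k2 := key l2
  have k3 := key l3
  have k4 := key l21
  have k5 := key l31
  have k6 := key l32
  have k7 := key l321
  simp only [mul_eq_zero, hμ1, hμ2, hμ3, false_or] at k1 k2 k3 k4 k5 k6 k7
  simp [octComb, k0, k1, k2, k3, k4, k5, k6, k7]

theorem center_eq (T : CayleyTriple F A μ1 μ2 μ3 a1 a2 a3) (hchar : (2 : F) ≠ 0)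
    (hμ1 : μ1 ≠ 0) (hμ2 : μ2 ≠ 0)
    (hgen : NonUnitalAlgebra.adjoin F ({1, a1, a2, a3} : Set A) = ⊤) :
    Set.center A = Set.range (fun c : F => c • (1 : A)) := by
  ext z
  rw [Set.mem_center_iff]
  constructor
  · intro hz
    have h := T.extract_central hz
    obtain ⟨c0, c1, c2, c3, c4, c5, c6, c7, hc⟩ := T.exists_coords hgen z
    have h4 : (4 : F) ≠ 0 := by
      rw [show (4 : F) = 2 * 2 by norm_num]
      exact mul_ne_zero hchar hchar
    have hk : 4 * μ1 * μ2 ≠ 0 := by simp [h4, hμ1, hμ2]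
    refine ⟨c0, smul_right_injective A hk ?_⟩
    simp only
    rw [← h, hc, T.extract_eq, smul_smul]
  · rintro ⟨c, rfl⟩
    exact ⟨fun a => by simp [Commute, SemiconjBy], fun a b => by simp [smul_mul_assoc],
      fun a b => by simp [mul_smul_comm]⟩

end CayleyTriple


/-- Over a field `F` of characteristic `≠ 2`, a nonzero unital
alternative `F`-algebra generated by `a1, a2, a3` satisfying the Cayley relations with
`aᵢ² = μᵢ·1` for nonzero `μᵢ` is central simple: its only two-sided ideals are `⊥` and
`⊤`, and its (nonassociative) center is `F·1`. -/
theorem octonion_presentation_central_simple (F : Type*) [Field F] (hchar : (2 : F) ≠ 0)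
    (μ1 μ2 μ3 : F) (hμ1 : μ1 ≠ 0) (hμ2 : μ2 ≠ 0) (hμ3 : μ3 ≠ 0)
    (A : Type*) [NonAssocRing A] [Module F A] [IsScalarTower F A A] [SMulCommClass F A A]
    [Nontrivial A]
    (alt₁ : ∀ a b : A, (a * a) * b = a * (a * b))
    (alt₂ : ∀ a b : A, (b * a) * a = b * (a * a))
    (a1 a2 a3 : A)
    (hgen : NonUnitalAlgebra.adjoin F ({1, a1, a2, a3} : Set A) = ⊤)
    (h21 : a2 * a1 = -(a1 * a2)) (h31 : a3 * a1 = -(a1 * a3))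
    (h32 : a3 * a2 = -(a2 * a3)) (h123 : (a1 * a2) * a3 = -(a1 * (a2 * a3)))
    (hsq1 : a1 * a1 = μ1 • (1 : A)) (hsq2 : a2 * a2 = μ2 • (1 : A))
    (hsq3 : a3 * a3 = μ3 • (1 : A)) :
    (∀ I : TwoSidedIdeal A, I = ⊥ ∨ I = ⊤) ∧
    Set.center A = Set.range (fun c : F => c • (1 : A)) := by
  have T : CayleyTriple F A μ1 μ2 μ3 a1 a2 a3 :=
    ⟨alt₁, alt₂, h21, h31, h32, h123, hsq1, hsq2, hsq3⟩
  exact ⟨T.ideal_eq_bot_or_top hchar hμ1 hμ2 hμ3 hgen, T.center_eq hchar hμ1 hμ2 hgen⟩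
end
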